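/- Let γ ≥ 1 and n be integers with n ≥ 3γ + 2. For every connected nonbipartite unicyclic graph G of order n with domination number γ, one has q_min(C*_{3,3γ−3}) ≤ q_min(G), where C*_{3,3γ−3} has order n, and equality holds if and only if G is isomorphic to C*_{3,3γ−3}. -/

import Mathlib

open scoped Classical

/-- `D` is a dominating set of `G`: every vertex not in `D` is adjacent to a vertex of `D`. -/
def IsDominatingSet {V : Type*} [Fintype V] (G : SimpleGraph V) (D : Finset V) : Prop :=
  ∀ v, v ∉ D → ∃ u ∈ D, G.Adj u v

/-- The domination number of `G`: minimum cardinality of a dominating set. -/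
noncomputable def dominationNumber {V : Type*} [Fintype V] (G : SimpleGraph V) : ℕ :=
  sInf {k | ∃ D : Finset V, IsDominatingSet G D ∧ D.card = k}

/-- Edge relation for the graph `C*_{s,l}` on vertex indices `0, …, n-1`:
vertices `0, …, s-1` form a cycle `C_s` (with `0` playing the role of `v_1`);
vertices `0, s, s+1, …, s+l-1` form a path of length `l` hanging at `0`;
and all remaining vertices `s+l, …, n-1` are pendant vertices attached to the
other end of the path (to `0` itself when `l = 0`). -/
def cstarRel (s l : ℕ) (a b : ℕ) : Prop :=
  (b = a + 1 ∧ a + 1 < s) ∨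
  (a = 0 ∧ b = s - 1) ∨
  (1 ≤ l ∧ a = 0 ∧ b = s) ∨
  (b = a + 1 ∧ s ≤ a ∧ a + 1 < s + l) ∨
  (a = (if l = 0 then 0 else s + l - 1) ∧ s + l ≤ b)

/-- The graph `C*_{s,l}` of order `n`: a cycle `C_s` with a path of length `l`
attached, and `n - s - l` pendant edges attached at the far end of the path. -/
def Cstar (n s l : ℕ) : SimpleGraph (Fin n) :=
  SimpleGraph.fromRel (fun i j => cstarRel s l i.val j.val)

/-- The signless Laplacian matrix `Q(G) = D(G) + A(G)` of a finite simple graph. -/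
noncomputable def signlessLaplacian {V : Type*} [Fintype V] (G : SimpleGraph V) :
    Matrix V V ℝ :=
  fun i j => (if i = j then (G.degree i : ℝ) else 0) + (if G.Adj i j then 1 else 0)

/-- The least eigenvalue of the signless Laplacian of `G`. -/
noncomputable def qmin {V : Type*} [Fintype V] (G : SimpleGraph V) : ℝ :=
  sInf {μ : ℝ | ∃ x : V → ℝ, x ≠ 0 ∧ (signlessLaplacian G).mulVec x = μ • x}

/-!
`qmin G` is the minimum of the Rayleigh quotient `∑ (x u + x v)² / ∑ (x v)²`, the first sum running
over the edges. Let `x` attain it, let `p` maximize `|x|` among the vertices of degree at least two,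
and strip leaves other than `p` until none is left. The remaining core `S` is connected and
nonbipartite and has `|S|` edges, so its degrees average two; counting closed neighbourhoods of a
dominating set then gives `|S| ≤ 3γ`.

List `|x|` increasingly on `S` as `y 0 ≤ y 1 ≤ …`. Some edge joining two values of the same sign
can be removed without disconnecting `S`, and the other edges still cross every cut between
consecutive labels; since `(a + b)² ≥ a² + b²` for `a, b ≥ 0`, the energy on `S` is at least that of
the triangle on the labels `0, 1, 2` with the path `2, 3, …`, on which only the edge `01` joins
equal signs. Every vertex outside `S` costs at least as much as a pendant vertex at the largest
value `Y = y (|S| - 1)`, whose cheapest value has modulus `Y / (1 - l)`, where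
`l = qmin (C*_{3,3γ-3})`. Extending `y` by this constant gives a test vector for `C*_{3,3γ-3}` and
hence the inequality, and equality in each step forces `G` to be this graph.
-/

section Energy

variable {V W : Type*} [Fintype V] [Fintype W] {G : SimpleGraph V} {H : SimpleGraph W}

/-- The contribution `(x u + x v)²` of a pair `{u, v}` to the quadratic form of a signless
Laplacian. -/
def edgeTerm {V : Type*} (x : V → ℝ) : Sym2 V → ℝ :=
  Sym2.lift ⟨fun u v => (x u + x v) ^ 2, fun u v => by simp only [add_comm]⟩

@[simp]
lemma edgeTerm_mk {V : Type*} (x : V → ℝ) (u v : V) : edgeTerm x s(u, v) = (x u + x v) ^ 2 :=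
  rfl

lemma edgeTerm_nonneg {V : Type*} (x : V → ℝ) (e : Sym2 V) : 0 ≤ edgeTerm x e := by
  induction e with
  | _ u v => exact sq_nonneg _

lemma edgeTerm_map {V W : Type*} (f : V → W) (x : W → ℝ) (e : Sym2 V) :
    edgeTerm x (e.map f) = edgeTerm (x ∘ f) e := by
  induction e with
  | _ u v => rfl

/-- The quadratic form `∑ (x u + x v)²`, over the edges `uv` of `G`, of the signless Laplacian. -/
noncomputable def energy (G : SimpleGraph V) (x : V → ℝ) : ℝ :=
  ∑ e ∈ G.edgeFinset, edgeTerm x e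

lemma energy_nonneg (G : SimpleGraph V) (x : V → ℝ) : 0 ≤ energy G x :=
  Finset.sum_nonneg fun e _ => edgeTerm_nonneg x e

lemma signlessLaplacian_eq_incMatrix_mul_transpose (G : SimpleGraph V) :
    signlessLaplacian G = G.incMatrix ℝ * (G.incMatrix ℝ).transpose := by
  rw [SimpleGraph.incMatrix_mul_transpose]
  ext u v
  by_cases h : u = v
  · subst h
    simp [signlessLaplacian]
  · simp [signlessLaplacian, h]

lemma posSemidef_signlessLaplacian (G : SimpleGraph V) : (signlessLaplacian G).PosSemidef := by
  rw [signlessLaplacian_eq_incMatrix_mul_transpose, ← Matrix.conjTranspose_eq_transpose_of_trivial]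
  exact Matrix.posSemidef_self_mul_conjTranspose _

lemma vecMul_incMatrix (G : SimpleGraph V) (x : V → ℝ) {u v : V} (h : G.Adj u v) :
    Matrix.vecMul x (G.incMatrix ℝ) s(u, v) = x u + x v := by
  have hinc (w : V) : x w * G.incMatrix ℝ w s(u, v) =
      (if w = u then x w else 0) + (if w = v then x w else 0) := by
    have hne := h.ne
    by_cases hu : w = u
    · simp [SimpleGraph.incMatrix_apply', SimpleGraph.incidenceSet, h, hu, hne]
    · simp [SimpleGraph.incMatrix_apply', SimpleGraph.incidenceSet, h, hu]
  simp [Matrix.vecMul, dotProduct, hinc, Finset.sum_add_distrib]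

lemma sq_vecMul_incMatrix (G : SimpleGraph V) (x : V → ℝ) (e : Sym2 V) :
    Matrix.vecMul x (G.incMatrix ℝ) e ^ 2 = if e ∈ G.edgeFinset then edgeTerm x e else 0 := by
  induction e with
  | _ u v =>
    by_cases h : G.Adj u v
    · simp [vecMul_incMatrix, h]
    · simp [Matrix.vecMul, dotProduct, SimpleGraph.incMatrix_apply', SimpleGraph.incidenceSet, h]

lemma dotProduct_signlessLaplacian_mulVec (G : SimpleGraph V) (x : V → ℝ) :
    x ⬝ᵥ (signlessLaplacian G).mulVec x = energy G x := by
  rw [signlessLaplacian_eq_incMatrix_mul_transpose, ← Matrix.mulVec_mulVec,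
    Matrix.dotProduct_mulVec, Matrix.mulVec_transpose, dotProduct, energy]
  simp_rw [← pow_two, sq_vecMul_incMatrix]
  rw [Finset.sum_ite_mem, Finset.univ_inter]

lemma map_edgeFinset_embedding (f : G ↪g H) : G.edgeFinset.map f.toEmbedding.sym2Map =
    {e ∈ H.edgeFinset | ∀ w ∈ e, w ∈ Set.range f} := by
  ext e
  simp only [Finset.mem_map, Finset.mem_filter, SimpleGraph.mem_edgeFinset]
  constructor
  · rintro ⟨e, he, rfl⟩
    induction e with
    | _ u v => simpa using he
  · induction e with
    | _ a b =>
      rintro ⟨hab, h⟩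
      obtain ⟨u, rfl⟩ := h a (Sym2.mem_mk_left a b)
      obtain ⟨v, rfl⟩ := h b (Sym2.mem_mk_right _ b)
      exact ⟨s(u, v), by simpa using hab, rfl⟩

lemma energy_comp_embedding (f : G ↪g H) (x : W → ℝ) :
    energy G (x ∘ f) = ∑ e ∈ H.edgeFinset with ∀ w ∈ e, w ∈ Set.range f, edgeTerm x e := by
  rw [← map_edgeFinset_embedding, Finset.sum_map]
  exact Finset.sum_congr rfl fun e _ => (edgeTerm_map f x e).symm

lemma card_filter_edgeFinset_range (f : G ↪g H) :
    Finset.card {e ∈ H.edgeFinset | ∀ w ∈ e, w ∈ Set.range f} = G.edgeSet.ncard := by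
  rw [← map_edgeFinset_embedding, Finset.card_map, ← G.coe_edgeFinset, Set.ncard_coe_finset]

lemma energy_comp_iso (f : G ≃g H) (x : W → ℝ) : energy G (x ∘ f) = energy H x := by
  refine (energy_comp_embedding f.toEmbedding x).trans ?_
  rw [Finset.filter_true_of_mem fun e _ w _ => f.surjective w, energy]

lemma energy_comap_equiv (σ : V ≃ W) (H : SimpleGraph W) (x : W → ℝ) :
    energy (H.comap σ) (x ∘ σ) = energy H x :=
  energy_comp_iso (SimpleGraph.Iso.comap σ H) x

lemma sum_sq_pos {x : V → ℝ} (hx : x ≠ 0) : 0 < ∑ v, x v ^ 2 := by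
  obtain ⟨v, hv⟩ := Function.ne_iff.mp hx
  exact Finset.sum_pos' (fun _ _ => sq_nonneg _) ⟨v, Finset.mem_univ v, sq_pos_of_ne_zero hv⟩

lemma exists_least_eigenvalue [Nonempty V] {A : Matrix V V ℝ} (hA : A.PosSemidef) :
    ∃ μ : ℝ, (∃ x ≠ 0, A.mulVec x = μ • x) ∧ ∀ y, μ * ∑ v, y v ^ 2 ≤ y ⬝ᵥ A.mulVec y := by
  have hsymm := Matrix.isSymmetric_toEuclideanLin_iff.mpr hA.isHermitian
  have hform (y : EuclideanSpace ℝ V) :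
      inner ℝ (A.toEuclideanLin y) y = y.ofLp ⬝ᵥ A.mulVec y.ofLp := by
    simp [PiLp.inner_apply, dotProduct]
  obtain ⟨x, hx⟩ := hsymm.hasEigenvalue_iInf_of_finiteDimensional.exists_hasEigenvector
  refine ⟨_, ⟨x.ofLp, by simpa using hx.2, congrArg WithLp.ofLp hx.apply_eq_smul⟩, fun y => ?_⟩
  rcases eq_or_ne y 0 with rfl | hy
  · simp
  · rw [← le_div_iff₀ (sum_sq_pos hy)]
    refine (ciInf_le ⟨0, ?_⟩ ⟨WithLp.toLp 2 y, by simpa using hy⟩).trans_eq ?_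
    · rintro _ ⟨z, rfl⟩
      have := hA.dotProduct_mulVec_nonneg z.1.ofLp
      simp only [RCLike.re_to_real, hform]
      positivity
    · rw [hform]
      simp [EuclideanSpace.norm_sq_eq]

lemma qmin_spec [Nonempty V] (G : SimpleGraph V) :
    (∃ x ≠ 0, (signlessLaplacian G).mulVec x = qmin G • x) ∧
      ∀ y, qmin G * ∑ v, y v ^ 2 ≤ energy G y := by
  obtain ⟨μ, hμ, hle⟩ := exists_least_eigenvalue (posSemidef_signlessLaplacian G)
  simp only [dotProduct_signlessLaplacian_mulVec] at hle
  suffices qmin G = μ from this ▸ ⟨hμ, hle⟩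
  refine IsLeast.csInf_eq ⟨hμ, ?_⟩
  rintro ν ⟨y, hy0, hy⟩
  have hy_le := hle y
  rw [← dotProduct_signlessLaplacian_mulVec, hy, dotProduct_smul, smul_eq_mul] at hy_le
  refine le_of_mul_le_mul_right (hy_le.trans_eq ?_) (sum_sq_pos hy0)
  simp [dotProduct, pow_two]

lemma qmin_mul_sum_sq_le_energy (G : SimpleGraph V) (x : V → ℝ) :
    qmin G * ∑ v, x v ^ 2 ≤ energy G x := by
  cases isEmpty_or_nonempty V
  · simp [energy_nonneg]
  · exact (qmin_spec G).2 x

lemma exists_energy_eq_qmin [Nonempty V] (G : SimpleGraph V) :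
    ∃ x ≠ 0, energy G x = qmin G * ∑ v, x v ^ 2 := by
  obtain ⟨x, hx0, hx⟩ := (qmin_spec G).1
  refine ⟨x, hx0, ?_⟩
  rw [← dotProduct_signlessLaplacian_mulVec, hx, dotProduct_smul, smul_eq_mul]
  simp [dotProduct, pow_two]

lemma qmin_le_of_energy_le {c : ℝ} {x : V → ℝ} (hx : x ≠ 0)
    (h : energy G x ≤ c * ∑ v, x v ^ 2) : qmin G ≤ c :=
  le_of_mul_le_mul_right ((qmin_mul_sum_sq_le_energy G x).trans h) (sum_sq_pos hx)

lemma qmin_le_of_iso [Nonempty W] (f : G ≃g H) : qmin G ≤ qmin H := by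
  obtain ⟨x, hx0, hx⟩ := exists_energy_eq_qmin H
  refine qmin_le_of_energy_le (x := x ∘ f) (fun h => hx0 ?_) ?_
  · exact f.surjective.injective_comp_right h
  · rw [energy_comp_iso, hx]
    exact (congrArg _ (Equiv.sum_comp f.toEquiv fun w => x w ^ 2)).ge

lemma qmin_eq_of_iso [Nonempty V] (f : G ≃g H) : qmin G = qmin H :=
  have : Nonempty W := f.toEquiv.nonempty_congr.mp ‹_›
  le_antisymm (qmin_le_of_iso f) (qmin_le_of_iso f.symm)

end Energy

section Bipartite

variable {V : Type*} {G : SimpleGraph V}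

lemma colorable_two_iff : G.Colorable 2 ↔ ∃ c : V → Bool, ∀ u v, G.Adj u v → c u ≠ c v := by
  constructor
  · rintro ⟨c⟩
    refine ⟨fun v => c v = 0, fun u v huv => ?_⟩
    have := c.valid huv
    simp only [ne_eq, decide_eq_decide]
    omega
  · rintro ⟨c, hc⟩
    exact (SimpleGraph.Coloring.mk c fun {u v} => hc u v).colorable

lemma colorable_two_of_isBridge {a b : V} (hab : G.IsBridge s(a, b))
    (hcol : (G.deleteEdges {s(a, b)}).Colorable 2) : G.Colorable 2 := by
  obtain ⟨c, hc⟩ := colorable_two_iff.mp hcol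
  rw [SimpleGraph.isBridge_iff] at hab
  rw [colorable_two_iff]
  have hadj {u v : V} (huv : G.Adj u v) (he : s(u, v) ≠ s(a, b)) :
      (G.deleteEdges {s(a, b)}).Adj u v := by simp [huv, he]
  by_cases hcab : c a = c b
  · -- Swapping the two colours on the side of `a` repairs the only monochromatic edge.
    let onSide (v : V) : Bool := (G.deleteEdges {s(a, b)}).Reachable a v
    have hside_a : onSide a = true := by simp [onSide]
    have hside_b : onSide b = false := by simp [onSide, hab]
    refine ⟨fun v => xor (onSide v) (c v), fun u v huv => ?_⟩
    by_cases he : s(u, v) = s(a, b)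
    · rcases Sym2.eq_iff.mp he with ⟨rfl, rfl⟩ | ⟨rfl, rfl⟩ <;>
        simp [hside_a, hside_b, hcab]
    · have hside : onSide u = onSide v := by
        have hreach := (hadj huv he).reachable
        simp only [onSide, decide_eq_decide]
        exact ⟨fun h => h.trans hreach, fun h => h.trans hreach.symm⟩
      simpa [hside] using hc u v (hadj huv he)
  · refine ⟨c, fun u v huv => ?_⟩
    by_cases he : s(u, v) = s(a, b)
    · rcases Sym2.eq_iff.mp he with ⟨rfl, rfl⟩ | ⟨rfl, rfl⟩
      exacts [hcab, Ne.symm hcab]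
    · exact hc u v (hadj huv he)

lemma colorable_two_of_deleteEdges_bridges (F : Finset (Sym2 V)) (hF : ∀ e ∈ F, G.IsBridge e)
    (hcol : (G.deleteEdges F).Colorable 2) : G.Colorable 2 := by
  induction F using Finset.induction_on with
  | empty => simpa using hcol
  | insert e F _ ih =>
    refine ih (fun f hf => hF f (Finset.mem_insert_of_mem hf)) ?_
    rw [Finset.coe_insert, Set.insert_eq, Set.union_comm, ← SimpleGraph.deleteEdges_deleteEdges]
      at hcol
    have hbridge := (hF e (Finset.mem_insert_self e F)).anti (G.deleteEdges_le F)
    induction e with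
    | _ a b => exact colorable_two_of_isBridge hbridge hcol

lemma exists_monochromatic_not_isBridge [Finite V] (hG : ¬ G.Colorable 2) (c : V → Bool) :
    ∃ a b, G.Adj a b ∧ c a = c b ∧ ¬ G.IsBridge s(a, b) := by
  have := Fintype.ofFinite V
  contrapose! hG
  refine colorable_two_of_deleteEdges_bridges {e | G.IsBridge e} (by simp) ?_
  refine colorable_two_iff.mpr ⟨c, fun u v huv => ?_⟩
  simp only [Finset.coe_filter, Finset.mem_univ, true_and, SimpleGraph.deleteEdges_adj,
    Set.mem_ofPred_eq] at huv
  exact fun hc => huv.2 (hG u v huv.1 hc)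

lemma exists_monochromatic_connected_deleteEdges [Finite V] (hconn : G.Connected)
    (hG : ¬ G.Colorable 2) (c : V → Bool) :
    ∃ a b, G.Adj a b ∧ c a = c b ∧ (G.deleteEdges {s(a, b)}).Connected := by
  obtain ⟨a, b, hab, hc, hbridge⟩ := exists_monochromatic_not_isBridge hG c
  exact ⟨a, b, hab, hc, hconn.connected_delete_edge_of_not_isBridge hbridge⟩

lemma card_le_ncard_edgeSet [Finite V] (hconn : G.Connected) (hG : ¬ G.Colorable 2) :
    Nat.card V ≤ G.edgeSet.ncard := by
  obtain ⟨a, b, hab, -, hdel⟩ :=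
    exists_monochromatic_connected_deleteEdges hconn hG fun _ => true
  have hcard := hdel.card_vert_le_card_edgeSet_add_one
  have hlt : (G.deleteEdges {s(a, b)}).edgeSet.ncard < G.edgeSet.ncard := by
    refine Set.ncard_lt_ncard (SimpleGraph.edgeSet_ssubset_edgeSet.mpr ?_)
    refine (G.deleteEdges_le _).lt_of_ne fun h => ?_
    rw [← h] at hab
    simp at hab
  rw [Nat.card_coe_set_eq] at hcard
  omega

lemma qmin_pos [Fintype V] (hconn : G.Connected) (hG : ¬ G.Colorable 2) : 0 < qmin G := by
  have := hconn.nonempty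
  obtain ⟨x, hx0, hx⟩ := exists_energy_eq_qmin G
  by_contra! hle
  have henergy : energy G x = 0 :=
    le_antisymm (hx.trans_le (mul_nonpos_of_nonpos_of_nonneg hle (sum_sq_pos hx0).le))
      (energy_nonneg G x)
  have hadj (u v : V) (huv : G.Adj u v) : x u = -x v := by
    have := (Finset.sum_eq_zero_iff_of_nonneg fun e _ => edgeTerm_nonneg x e).mp henergy
      s(u, v) (by simpa using huv)
    rw [edgeTerm_mk, sq_eq_zero_iff] at this
    linarith
  obtain ⟨v₀, hv₀⟩ := Function.ne_iff.mp hx0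
  have hne (v : V) : x v ≠ 0 := by
    obtain ⟨p⟩ := hconn.preconnected v v₀
    induction p with
    | nil => exact hv₀
    | cons h _ ih =>
      rw [hadj _ _ h]
      exact neg_ne_zero.mpr (ih hv₀)
  refine hG (colorable_two_iff.mpr ⟨fun v => 0 < x v, fun u v huv => ?_⟩)
  have := hne v
  simp only [hadj u v huv, ne_eq, decide_eq_decide, Left.neg_pos_iff]
  grind

end Bipartite

section TriangleBroom

/-- A copy of `C*_{3,K-3}` of order `n` whose labels increase along the path: the triangle is
`0, 1, 2`, the path is `2, 3, …, K-1`, and the vertices `v ≥ K` are pendant at `K-1`. Thus `0` is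
joined to `2`, and every `v ≥ 1` is joined to `min v K - 1`. -/
def triangleBroom (n K : ℕ) : SimpleGraph (Fin n) :=
  SimpleGraph.fromRel fun i j =>
    (i.val = 0 ∧ j.val = 2) ∨ (1 ≤ j.val ∧ i.val = min j.val K - 1)

lemma triangleBroom_adj_of_lt {n : ℕ} (K : ℕ) {i j : Fin n} (hij : i < j) :
    (triangleBroom n K).Adj i j ↔ (i.val = 0 ∧ j.val = 2) ∨ i.val = min j.val K - 1 := by
  have : i.val < j.val := hij
  simp only [triangleBroom, SimpleGraph.fromRel_adj, ne_eq, hij.ne, not_false_eq_true, true_and]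
  omega

lemma eq_triangleBroom {n K : ℕ} {H : SimpleGraph (Fin n)}
    (h : ∀ i j, i < j → (H.Adj i j ↔ (i.val = 0 ∧ j.val = 2) ∨ i.val = min j.val K - 1)) :
    H = triangleBroom n K := by
  ext i j
  rcases lt_trichotomy i j with hij | rfl | hij
  · rw [h i j hij, triangleBroom_adj_of_lt K hij]
  · simp
  · rw [H.adj_comm, (triangleBroom n K).adj_comm, h j i hij, triangleBroom_adj_of_lt K hij]

lemma cstarRel_three_iff (l a b : ℕ) : cstarRel 3 l a b ↔
    (b < 3 ∧ a < b) ∨ (3 ≤ b ∧ b < l + 3 ∧ a = if b = 3 then 0 else b - 1) ∨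
      (l + 3 ≤ b ∧ a = if l = 0 then 0 else l + 2) := by
  unfold cstarRel
  by_cases hl : l = 0
  · subst hl
    simp only [if_true]
    split_ifs <;> omega
  · simp only [hl, if_false]
    split_ifs <;> omega

lemma cstarRel_swap_iff {K a b : ℕ} (hK : 3 ≤ K) (hab : a < b) :
    (cstarRel 3 (K - 3) (Equiv.swap 0 2 a) (Equiv.swap 0 2 b) ∨
      cstarRel 3 (K - 3) (Equiv.swap 0 2 b) (Equiv.swap 0 2 a)) ↔
    (a = 0 ∧ b = 2) ∨ a = min b K - 1 := by
  obtain ⟨l, rfl⟩ := Nat.exists_eq_add_of_le' hK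
  simp only [cstarRel_three_iff, Nat.add_sub_cancel]
  by_cases hb : b < 3
  · interval_cases b <;> interval_cases a <;> simp [Equiv.swap_apply_def]
  · rw [Equiv.swap_apply_of_ne_of_ne (by omega : b ≠ 0) (by omega)]
    have hswap : (a = 0 ∧ Equiv.swap 0 2 a = 2) ∨ (a = 2 ∧ Equiv.swap 0 2 a = 0) ∨
        (a ≠ 0 ∧ a ≠ 2 ∧ Equiv.swap 0 2 a = a) := by
      grind
    generalize Equiv.swap 0 2 a = a' at *
    split_ifs <;> omega

lemma nonempty_triangleBroom_iso_Cstar {n K : ℕ} (hn : 3 ≤ n) (hK : 3 ≤ K) :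
    Nonempty (triangleBroom n K ≃g Cstar n 3 (K - 3)) := by
  let σ : Equiv.Perm (Fin n) := Equiv.swap ⟨0, by omega⟩ ⟨2, by omega⟩
  have hσ (i : Fin n) : (σ i).val = Equiv.swap 0 2 i.val := by
    simp only [σ, Equiv.swap_apply_def, Fin.ext_iff]
    split_ifs <;> rfl
  rw [← eq_triangleBroom (H := (Cstar n 3 (K - 3)).comap σ)]
  · exact ⟨SimpleGraph.Iso.comap σ _⟩
  · intro i j hij
    rw [SimpleGraph.comap_adj, Cstar, SimpleGraph.fromRel_adj, hσ, hσ,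
      cstarRel_swap_iff hK hij]
    simp [hij.ne]

/-- The value `∑ (x u + x v)²` of the energy on `triangleBroom n K` at the vector with absolute
values `y` whose signs alternate along all edges except `{0, 1}`. -/
def broomEnergy (K n : ℕ) (y : ℕ → ℝ) : ℝ :=
  (y 0 + y 1) ^ 2 + (y 2 - y 0) ^ 2 + ∑ v ∈ Finset.Ico 2 n, (y v - y (min v K - 1)) ^ 2

lemma neg_one_pow_min_sub_one {K v : ℕ} (hK : 2 ≤ K) (hv : 2 ≤ v) :
    (-1 : ℝ) ^ (min (min v K - 1) K - 1) = -(-1) ^ (min v K - 1) := by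
  obtain ⟨k, hk⟩ : ∃ k, min v K = k + 2 := ⟨min v K - 2, by omega⟩
  rw [hk, show min (k + 2 - 1) K - 1 = k by omega, show k + 2 - 1 = k + 1 by omega]
  ring

lemma exists_lt_adj_of_mem_edgeSet {α : Type*} [LinearOrder α] {G : SimpleGraph α} {e : Sym2 α}
    (he : e ∈ G.edgeSet) : ∃ i j, i < j ∧ G.Adj i j ∧ e = s(i, j) := by
  induction e with
  | _ a b =>
    rw [SimpleGraph.mem_edgeSet] at he
    rcases he.ne.lt_or_gt with hab | hab
    · exact ⟨a, b, hab, he, rfl⟩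
    · exact ⟨b, a, hab, he.symm, Sym2.eq_swap⟩

lemma energy_triangleBroom_le (n K : ℕ) (x : ℕ → ℝ) :
    energy (triangleBroom n K) (x ∘ Fin.val) ≤
      (x 0 + x 2) ^ 2 + ∑ v ∈ Finset.Ico 1 n, (x (min v K - 1) + x v) ^ 2 := by
  let parentEdge (v : ℕ) : Sym2 ℕ := s(min v K - 1, v)
  have hcover : (triangleBroom n K).edgeFinset.map Fin.valEmbedding.sym2Map ⊆
      {s(0, 2)} ∪ (Finset.Ico 1 n).image parentEdge := by
    intro e he
    obtain ⟨e, hmem, rfl⟩ := Finset.mem_map.mp he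
    obtain ⟨i, j, hij, hadj, rfl⟩ :=
      exists_lt_adj_of_mem_edgeSet (SimpleGraph.mem_edgeFinset.mp hmem)
    rw [Finset.mem_union, Finset.mem_singleton, Finset.mem_image]
    rcases (triangleBroom_adj_of_lt K hij).mp hadj with ⟨hi, hj⟩ | hi
    · exact Or.inl (congrArg₂ (s(·, ·)) hi hj)
    · have : i.val < j.val := hij
      exact Or.inr ⟨j, Finset.mem_Ico.mpr ⟨by omega, j.2⟩, by simp [parentEdge, hi]⟩
  calc energy (triangleBroom n K) (x ∘ Fin.val)
      = ∑ e ∈ (triangleBroom n K).edgeFinset.map Fin.valEmbedding.sym2Map, edgeTerm x e := by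
        rw [Finset.sum_map]
        exact Finset.sum_congr rfl fun e _ => (edgeTerm_map _ x e).symm
    _ ≤ ∑ e ∈ {s(0, 2)} ∪ (Finset.Ico 1 n).image parentEdge, edgeTerm x e :=
        Finset.sum_le_sum_of_subset_of_nonneg hcover fun e _ _ => edgeTerm_nonneg x e
    _ ≤ ∑ e ∈ {s(0, 2)}, edgeTerm x e +
          ∑ e ∈ (Finset.Ico 1 n).image parentEdge, edgeTerm x e := by
        rw [← Finset.sum_union_inter]
        exact le_add_of_nonneg_right (Finset.sum_nonneg fun e _ => edgeTerm_nonneg x e)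
    _ ≤ (x 0 + x 2) ^ 2 + ∑ v ∈ Finset.Ico 1 n, edgeTerm x (parentEdge v) := by
        rw [Finset.sum_singleton, edgeTerm_mk]
        gcongr
        exact Finset.sum_image_le_of_nonneg fun e _ => edgeTerm_nonneg x e

lemma qmin_triangleBroom_mul_le {n K : ℕ} (hn : 2 ≤ n) (hK : 2 ≤ K) (y : ℕ → ℝ) :
    qmin (triangleBroom n K) * ∑ v ∈ Finset.range n, y v ^ 2 ≤ broomEnergy K n y := by
  let x (v : ℕ) : ℝ := (-1) ^ (min v K - 1) * y v
  have hsq (k : ℕ) (z : ℝ) : ((-1) ^ k * z) ^ 2 = z ^ 2 := by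
    rw [mul_pow, ← pow_mul, mul_comm k, pow_mul]
    simp
  have hparent (v : ℕ) (hv : v ∈ Finset.Ico 2 n) :
      (x (min v K - 1) + x v) ^ 2 = (y v - y (min v K - 1)) ^ 2 := by
    rw [← hsq (min v K - 1) (y v - _)]
    simp only [x, neg_one_pow_min_sub_one hK (Finset.mem_Ico.mp hv).1]
    ring
  calc qmin (triangleBroom n K) * ∑ v ∈ Finset.range n, y v ^ 2
      = qmin (triangleBroom n K) * ∑ i : Fin n, (x ∘ Fin.val) i ^ 2 := by
        rw [Finset.sum_range]
        exact congrArg _ (Finset.sum_congr rfl fun i _ => (hsq _ _).symm)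
    _ ≤ energy (triangleBroom n K) (x ∘ Fin.val) := qmin_mul_sum_sq_le_energy _ _
    _ ≤ _ := energy_triangleBroom_le n K x
    _ = broomEnergy K n y := by
        rw [Finset.sum_eq_sum_Ico_succ_bot hn, Finset.sum_congr rfl hparent, broomEnergy]
        simp only [x, show min 0 K - 1 = 0 by omega, show min 1 K - 1 = 0 by omega,
          show min 2 K - 1 = 1 by omega]
        ring

lemma connected_triangleBroom {n : ℕ} (hn : 0 < n) (K : ℕ) : (triangleBroom n K).Connected := by
  rw [SimpleGraph.connected_iff_exists_forall_reachable]
  refine ⟨⟨0, hn⟩, fun ⟨v, hv⟩ => ?_⟩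
  induction v using Nat.strong_induction_on with
  | _ v ih =>
    rcases Nat.eq_zero_or_pos v with rfl | hpos
    · rfl
    · refine (ih (min v K - 1) (by omega) (by omega)).trans (SimpleGraph.Adj.reachable ?_)
      exact (triangleBroom_adj_of_lt K (Fin.mk_lt_mk.mpr (by omega))).mpr (Or.inr rfl)

lemma not_colorable_two_triangleBroom {n K : ℕ} (hn : 3 ≤ n) (hK : 2 ≤ K) :
    ¬ (triangleBroom n K).Colorable 2 := by
  rw [colorable_two_iff]
  rintro ⟨c, hc⟩
  have hadj {i j : ℕ} (hi : i < n) (hj : j < n) (hij : i < j)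
      (h : (i = 0 ∧ j = 2) ∨ i = min j K - 1) : c ⟨i, hi⟩ ≠ c ⟨j, hj⟩ :=
    hc _ _ ((triangleBroom_adj_of_lt K (Fin.mk_lt_mk.mpr hij)).mpr h)
  have h01 := hadj (i := 0) (j := 1) (by omega) (by omega) (by omega) (by omega)
  have h12 := hadj (i := 1) (j := 2) (by omega) (by omega) (by omega) (by omega)
  have h02 := hadj (i := 0) (j := 2) (by omega) (by omega) (by omega) (by omega)
  exact h02 (by rw [Bool.eq_not_of_ne h01, Bool.eq_not_of_ne h12, Bool.not_not])

lemma qmin_triangleBroom_pos {n K : ℕ} (hn : 3 ≤ n) (hK : 2 ≤ K) :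
    0 < qmin (triangleBroom n K) :=
  qmin_pos (connected_triangleBroom (by omega) K) (not_colorable_two_triangleBroom hn hK)

lemma qmin_triangleBroom_lt_one {n K : ℕ} (hn : 5 ≤ n) (hK : 3 ≤ K) :
    qmin (triangleBroom n K) < 1 := by
  let y (v : ℕ) : ℝ := if 2 ≤ v then 1 else 0
  have henergy : broomEnergy K n y = 2 := by
    rw [broomEnergy, Finset.sum_eq_sum_Ico_succ_bot (by omega), Finset.sum_eq_zero]
    · simp [y, show min 2 K - 1 = 1 by omega]
      norm_num
    · intro v hv
      have := Finset.mem_Ico.mp hv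
      simp [y, show 2 ≤ v by omega, show 2 ≤ min v K - 1 by omega]
  have hnorm : 3 ≤ ∑ v ∈ Finset.range n, y v ^ 2 := by
    have hsub : Finset.Ico 2 5 ⊆ Finset.range n := fun v hv => by
      simp only [Finset.mem_Ico, Finset.mem_range] at hv ⊢
      omega
    refine le_trans ?_ (Finset.sum_le_sum_of_subset_of_nonneg hsub fun v _ _ => sq_nonneg _)
    norm_num [y, Finset.sum_Ico_eq_sum_range, Finset.sum_range_succ]
  have hle := qmin_triangleBroom_mul_le (by omega) (by omega) y (n := n) (K := K)
  rw [henergy] at hle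
  nlinarith

end TriangleBroom

section Rearrangement

lemma exists_adj_of_cut {V : Type*} {G : SimpleGraph V} (hG : G.Preconnected) {S : Set V} {u v : V}
    (hu : u ∈ S) (hv : v ∉ S) : ∃ a ∈ S, ∃ b ∉ S, G.Adj a b := by
  obtain ⟨p⟩ := hG u v
  obtain ⟨d, -, ha, hb⟩ := p.exists_boundary_dart S hu hv
  exact ⟨d.fst, ha, d.snd, hb, d.adj⟩

lemma sum_sq_gaps_le {y : ℕ → ℝ} (hy : Monotone y) {i j : ℕ} (hij : i ≤ j) :
    ∑ k ∈ Finset.Ico i j, (y (k + 1) - y k) ^ 2 ≤ (y j - y i) ^ 2 := by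
  refine (Finset.sum_sq_le_sq_sum_of_nonneg fun k _ => sub_nonneg.mpr (hy k.le_succ)).trans_eq ?_
  rw [Finset.sum_Ico_eq_sub _ hij, Finset.sum_range_sub, Finset.sum_range_sub]
  ring

lemma sum_sq_gaps_add_le {y : ℕ → ℝ} (hy : Monotone y) {i j r : ℕ} (hij : i < j) (hr : r ≤ j)
    {F : Finset ℕ} (hF : ∀ k ∈ F, k = i ∨ max (i + 1) r ≤ k ∧ k < j) :
    ∑ k ∈ F, (y (max (k + 1) r) - y k) ^ 2 +
        2 * ((y j - y (max (i + 1) r)) * (y (max (i + 1) r) - y i)) ≤ (y j - y i) ^ 2 := by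
  have hsub : F ⊆ insert i (Finset.Ico (max (i + 1) r) j) := fun k hk => by
    simpa [Finset.mem_insert, Finset.mem_Ico] using hF k hk
  have hIco : ∑ k ∈ Finset.Ico (max (i + 1) r) j, (y (max (k + 1) r) - y k) ^ 2 =
      ∑ k ∈ Finset.Ico (max (i + 1) r) j, (y (k + 1) - y k) ^ 2 := by
    refine Finset.sum_congr rfl fun k hk => ?_
    rw [max_eq_left (by have := Finset.mem_Ico.mp hk; omega)]
  have hle := Finset.sum_le_sum_of_subset_of_nonneg hsub
    fun k _ _ => sq_nonneg (y (max (k + 1) r) - y k)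
  rw [Finset.sum_insert (by simp), hIco] at hle
  linarith [sum_sq_gaps_le hy (show max (i + 1) r ≤ j by omega)]

variable {m r : ℕ} {T : SimpleGraph (Fin m)} {y : ℕ → ℝ}

lemma exists_crossing_edge (hT : T.Preconnected) (hr : ∀ i j, T.Adj i j → i < j → r ≤ j.val)
    {k : ℕ} (hk : k ∈ Finset.range (m - 1)) :
    ∃ e ∈ T.edgeFinset, k = e.inf ∨ max (e.inf.val + 1) r ≤ k ∧ k < e.sup := by
  have hkm : k + 1 < m := by
    rw [Finset.mem_range] at hk
    omega
  -- Labels below `r` are cut off on their own, the others with all smaller labels.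
  obtain ⟨a, ha, b, hb, hab⟩ := exists_adj_of_cut hT
    (S := {i | i.val = k ∨ r ≤ k ∧ i.val < k}) (u := ⟨k, by omega⟩) (v := ⟨k + 1, hkm⟩)
    (by simp) (by simp)
  simp only [Set.mem_ofPred_eq] at ha hb
  have hne : a.val ≠ b.val := Fin.val_ne_of_ne hab.ne
  refine ⟨s(a, b), by simpa using hab, ?_⟩
  rcases hab.ne.lt_or_gt with h | h <;> have : _ < _ := Fin.lt_def.mp h
  · have := hr a b hab h
    simp only [Sym2.inf_mk, Sym2.sup_mk, inf_of_le_left h.le, sup_of_le_right h.le]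
    omega
  · have := hr b a hab.symm h
    simp only [Sym2.inf_mk, Sym2.sup_mk, inf_of_le_right h.le, sup_of_le_left h.le]
    omega

lemma sum_broom_gaps_add_le (hT : T.Connected)
    (hr : ∀ i j, T.Adj i j → i < j → r ≤ j.val) (hy : Monotone y) :
    ∑ k ∈ Finset.range (m - 1), (y (max (k + 1) r) - y k) ^ 2 +
        ∑ e ∈ T.edgeFinset, 2 * ((y e.sup - y (max (e.inf + 1) r)) *
          (y (max (e.inf + 1) r) - y e.inf)) ≤
      ∑ e ∈ T.edgeFinset, (y e.sup - y e.inf) ^ 2 := by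
  have : Nonempty (Sym2 (Fin m)) := hT.nonempty.map Sym2.diag
  choose! φ hφT hφ using fun k (hk : k ∈ Finset.range (m - 1)) =>
    exists_crossing_edge hT.preconnected hr hk
  rw [← Finset.sum_fiberwise_of_maps_to hφT, ← Finset.sum_add_distrib]
  refine Finset.sum_le_sum fun e he => ?_
  obtain ⟨i, j, hij, hadj, rfl⟩ := exists_lt_adj_of_mem_edgeSet (SimpleGraph.mem_edgeFinset.mp he)
  have hinf : (s(i, j) : Sym2 (Fin m)).inf = i := inf_of_le_left hij.le
  have hsup : (s(i, j) : Sym2 (Fin m)).sup = j := sup_of_le_right hij.le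
  rw [hinf, hsup]
  refine sum_sq_gaps_add_le hy hij (hr i j hadj hij) fun k hk => ?_
  obtain ⟨hkm, hke⟩ := Finset.mem_filter.mp hk
  simpa only [hke, hinf, hsup] using hφ k hkm

lemma slack_nonneg (hr : ∀ i j, T.Adj i j → i < j → r ≤ j.val) (hy : Monotone y) {e : Sym2 (Fin m)}
    (he : e ∈ T.edgeFinset) :
    0 ≤ 2 * ((y e.sup - y (max (e.inf + 1) r)) * (y (max (e.inf + 1) r) - y e.inf)) := by
  obtain ⟨i, j, hij, hadj, rfl⟩ := exists_lt_adj_of_mem_edgeSet (SimpleGraph.mem_edgeFinset.mp he)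
  have := hr i j hadj hij
  have : i.val < j.val := hij
  simp only [Sym2.inf_mk, Sym2.sup_mk, inf_of_le_left hij.le, sup_of_le_right hij.le]
  exact mul_nonneg zero_le_two (mul_nonneg (sub_nonneg.mpr (hy (by omega)))
    (sub_nonneg.mpr (hy (by omega))))

lemma sum_broom_gaps_le (hT : T.Connected)
    (hr : ∀ i j, T.Adj i j → i < j → r ≤ j.val) (hy : Monotone y) :
    ∑ k ∈ Finset.range (m - 1), (y (max (k + 1) r) - y k) ^ 2 ≤
      ∑ e ∈ T.edgeFinset, (y e.sup - y e.inf) ^ 2 :=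
  (le_add_of_nonneg_right (Finset.sum_nonneg fun _ he => slack_nonneg hr hy he)).trans
    (sum_broom_gaps_add_le hT hr hy)

lemma adj_iff_of_sum_gaps_le (hT : T.Connected)
    (hr : ∀ i j, T.Adj i j → i < j → r ≤ j.val) (hy : Monotone y)
    (hstrict : ∀ i j, i < j → r ≤ j → j < m → y i < y j)
    (heq : ∑ e ∈ T.edgeFinset, (y e.sup - y e.inf) ^ 2 ≤
      ∑ k ∈ Finset.range (m - 1), (y (max (k + 1) r) - y k) ^ 2)
    {i j : Fin m} (hij : i < j) : T.Adj i j ↔ j.val = max (i.val + 1) r := by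
  have hslack := (Finset.sum_eq_zero_iff_of_nonneg fun e he => slack_nonneg hr hy he).mp
    ((Finset.sum_nonneg fun e he => slack_nonneg hr hy he).antisymm'
      (by linarith [sum_broom_gaps_add_le hT hr hy]))
  have hnext {i j : Fin m} (hij : i < j) (hadj : T.Adj i j) : j.val = max (i.val + 1) r := by
    have : i.val < j.val := hij
    have hrj := hr i j hadj hij
    have hzero := hslack s(i, j) (by simpa using hadj)
    simp only [Sym2.inf_mk, Sym2.sup_mk, inf_of_le_left hij.le, sup_of_le_right hij.le] at hzero
    by_contra hne
    have h1 := hstrict (max (i.val + 1) r) j (by omega) hrj j.2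
    have h2 := hstrict i (max (i.val + 1) r) (by omega) (by omega) (by omega)
    nlinarith [mul_pos (sub_pos.mpr h1) (sub_pos.mpr h2)]
  refine ⟨hnext hij, fun hj => ?_⟩
  obtain ⟨e, he, hcross⟩ := exists_crossing_edge hT.preconnected hr (k := i)
    (Finset.mem_range.mpr (by have := j.2; omega))
  obtain ⟨i', j', hij', hadj, rfl⟩ :=
    exists_lt_adj_of_mem_edgeSet (SimpleGraph.mem_edgeFinset.mp he)
  have := hnext hij' hadj
  simp only [Sym2.inf_mk, Sym2.sup_mk, inf_of_le_left hij'.le, sup_of_le_right hij'.le] at hcross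
  obtain rfl : i = i' := by omega
  obtain rfl : j = j' := by omega
  exact hadj

end Rearrangement

section SortedEnergy

lemma energy_eq_add_energy_deleteEdges {V : Type*} [Fintype V] {G : SimpleGraph V} {a b : V}
    (hab : G.Adj a b) (x : V → ℝ) :
    energy G x = (x a + x b) ^ 2 + energy (G.deleteEdges {s(a, b)}) x := by
  rw [energy, energy, ← edgeTerm_mk,
    ← Finset.add_sum_erase _ _ (SimpleGraph.mem_edgeFinset.mpr (G.mem_edgeSet.mpr hab))]
  congr 1
  refine Finset.sum_congr ?_ fun _ _ => rfl
  ext e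
  simp [and_comm]

lemma broomEnergy_self_add {m r : ℕ} (hm : 2 ≤ m) (hr : 1 ≤ r) (hr' : r ≤ 2) (y : ℕ → ℝ) :
    broomEnergy m m y + (y r - y 0) ^ 2 = (y 0 + y 1) ^ 2 + (y 2 - y 0) ^ 2 +
      ∑ k ∈ Finset.range (m - 1), (y (max (k + 1) r) - y k) ^ 2 := by
  obtain ⟨l, rfl⟩ := Nat.exists_eq_add_of_le' hm
  rw [broomEnergy, Finset.sum_Ico_eq_sum_range, show l + 2 - 1 = l + 1 by omega,
    Finset.sum_range_succ', show l + 2 - 2 = l by omega, show max (0 + 1) r = r by omega]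
  have hshift (k : ℕ) (hk : k ∈ Finset.range l) :
      (y (2 + k) - y (min (2 + k) (l + 2) - 1)) ^ 2 =
        (y (max (k + 1 + 1) r) - y (k + 1)) ^ 2 := by
    have := Finset.mem_range.mp hk
    rw [show max (k + 1 + 1) r = 2 + k by omega, show min (2 + k) (l + 2) - 1 = k + 1 by omega]
  rw [Finset.sum_congr rfl hshift]
  ring

variable {m : ℕ} {H : SimpleGraph (Fin m)} {x : Fin m → ℝ} {y : ℕ → ℝ}

lemma sum_sq_sub_le_energy (T : SimpleGraph (Fin m)) (hxy : ∀ i, |x i| = y i) :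
    ∑ e ∈ T.edgeFinset, (y e.sup - y e.inf) ^ 2 ≤ energy T x := by
  refine Finset.sum_le_sum fun e he => ?_
  obtain ⟨i, j, hij, -, rfl⟩ := exists_lt_adj_of_mem_edgeSet (SimpleGraph.mem_edgeFinset.mp he)
  rw [Sym2.inf_mk, Sym2.sup_mk, inf_of_le_left hij.le, sup_of_le_right hij.le, edgeTerm_mk,
    ← hxy, ← hxy, sq_le_sq, ← abs_neg (x i), add_comm, ← sub_neg_eq_add]
  exact abs_abs_sub_abs_le _ _

lemma sum_broom_gaps_le_energy {r : ℕ} (hH : H.Connected)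
    (hr : ∀ i j, H.Adj i j → i < j → r ≤ j.val) (hy : Monotone y) (hxy : ∀ i, |x i| = y i) :
    ∑ k ∈ Finset.range (m - 1), (y (max (k + 1) r) - y k) ^ 2 ≤ energy H x :=
  (sum_broom_gaps_le hH hr hy).trans (sum_sq_sub_le_energy H hxy)

lemma adj_iff_of_energy_le {r : ℕ} (hH : H.Connected)
    (hr : ∀ i j, H.Adj i j → i < j → r ≤ j.val) (hy : Monotone y) (hxy : ∀ i, |x i| = y i)
    (hstrict : ∀ i j, i < j → r ≤ j → j < m → y i < y j)
    (hle : energy H x ≤ ∑ k ∈ Finset.range (m - 1), (y (max (k + 1) r) - y k) ^ 2)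
    {i j : Fin m} (hij : i < j) : H.Adj i j ↔ j.val = max (i.val + 1) r :=
  adj_iff_of_sum_gaps_le hH hr hy hstrict ((sum_sq_sub_le_energy H hxy).trans hle) hij

lemma exists_same_sign_edge (hconn : H.Connected) (hH : ¬ H.Colorable 2)
    (hxy : ∀ i, |x i| = y i) : ∃ a b, a < b ∧ H.Adj a b ∧ (x a + x b) ^ 2 = (y a + y b) ^ 2 ∧
      (H.deleteEdges {s(a, b)}).Connected := by
  obtain ⟨a, b, hab, hsign, hdel⟩ :=
    exists_monochromatic_connected_deleteEdges hconn hH fun i => decide (0 ≤ x i)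
  have hsq : (x a + x b) ^ 2 = (y a + y b) ^ 2 := by
    rw [decide_eq_decide] at hsign
    rw [← hxy, ← hxy]
    by_cases ha : 0 ≤ x a
    · rw [abs_of_nonneg ha, abs_of_nonneg (hsign.mp ha)]
    · rw [abs_of_neg (not_le.mp ha), abs_of_neg (not_le.mp (mt hsign.mpr ha))]
      ring
  rcases hab.ne.lt_or_gt with h | h
  · exact ⟨a, b, h, hab, hsq, hdel⟩
  · exact ⟨b, a, h, hab.symm, by rw [add_comm, hsq, add_comm], by rwa [Sym2.eq_swap]⟩

lemma two_le_of_deleteEdges_adj {a b i j : Fin m} (hab : a < b) (hb : b.val < 2)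
    (hadj : (H.deleteEdges {s(a, b)}).Adj i j) (hij : i < j) : 2 ≤ j.val := by
  rw [SimpleGraph.deleteEdges_adj] at hadj
  by_contra! hj
  have : a.val < b.val := hab
  have : i.val < j.val := hij
  refine hadj.2 (congrArg₂ (s(·, ·)) (Fin.ext ?_) (Fin.ext ?_)) <;> omega

lemma broomEnergy_add_le_energy {a b : Fin m} (hm : 2 ≤ m) (hy : Monotone y)
    (hxy : ∀ i, |x i| = y i) (hb : 2 ≤ b.val) (hadj : H.Adj a b)
    (hsq : (x a + x b) ^ 2 = (y a + y b) ^ 2) (hdel : (H.deleteEdges {s(a, b)}).Connected) :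
    broomEnergy m m y + 4 * (y 0 * (y 2 - y 1)) ≤ energy H x := by
  have hgaps := sum_broom_gaps_le_energy (r := 1) hdel (fun i j _ hij => by
    have : i.val < j.val := hij
    omega) hy hxy
  have hy0 : 0 ≤ y 0 := (abs_nonneg _).trans_eq (hxy ⟨0, by omega⟩)
  have hends : (y 0 + y 2) ^ 2 ≤ (y a + y b) ^ 2 :=
    pow_le_pow_left₀ (add_nonneg hy0 (hy0.trans (hy zero_le_two)))
      (add_le_add (hy a.val.zero_le) (hy hb)) 2
  rw [energy_eq_add_energy_deleteEdges hadj, hsq]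
  linarith [broomEnergy_self_add hm le_rfl one_le_two y]

lemma broomEnergy_le_energy (hm : 3 ≤ m) (hconn : H.Connected) (hH : ¬ H.Colorable 2)
    (hy : Monotone y) (hxy : ∀ i, |x i| = y i) : broomEnergy m m y ≤ energy H x := by
  obtain ⟨a, b, hab, hadj, hsq, hdel⟩ := exists_same_sign_edge hconn hH hxy
  rcases lt_or_ge b.val 2 with hb | hb
  · have := sum_broom_gaps_le_energy hdel (fun _ _ => two_le_of_deleteEdges_adj hab hb) hy hxy
    have : a.val < b.val := hab
    rw [energy_eq_add_energy_deleteEdges hadj, hsq, show a.val = 0 by omega,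
      show b.val = 1 by omega]
    linarith [broomEnergy_self_add (by omega : 2 ≤ m) one_le_two le_rfl y]
  · have := broomEnergy_add_le_energy (by omega) hy hxy hb hadj hsq hdel
    have hy0 : 0 ≤ y 0 := (abs_nonneg _).trans_eq (hxy ⟨0, by omega⟩)
    linarith [mul_nonneg hy0 (sub_nonneg.mpr (hy one_le_two))]

lemma eq_triangleBroom_of_energy_le (hm : 3 ≤ m) (hconn : H.Connected) (hH : ¬ H.Colorable 2)
    (hy : Monotone y) (hxy : ∀ i, |x i| = y i) (hy0 : 0 < y 0)
    (hstrict : ∀ k, 1 ≤ k → k + 1 < m → y k < y (k + 1)) (hle : energy H x ≤ broomEnergy m m y) :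
    H = triangleBroom m m := by
  obtain ⟨a, b, hab, hadj, hsq, hdel⟩ := exists_same_sign_edge hconn hH hxy
  have : a.val < b.val := hab
  have hb : b.val < 2 := by
    by_contra! hb
    have := broomEnergy_add_le_energy (by omega) hy hxy hb hadj hsq hdel
    linarith [mul_pos hy0 (sub_pos.mpr (hstrict 1 le_rfl (by omega)))]
  rw [energy_eq_add_energy_deleteEdges hadj, hsq, show a.val = 0 by omega,
    show b.val = 1 by omega] at hle
  have hlt' (i j : ℕ) (hij : i < j) (hj : 2 ≤ j) (hjm : j < m) : y i < y j := by
    obtain ⟨k, rfl⟩ := Nat.exists_eq_add_of_le' (show 1 ≤ j by omega)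
    exact (hy (by omega)).trans_lt (hstrict k (by omega) hjm)
  refine eq_triangleBroom fun i j hij => ?_
  have : i.val < j.val := hij
  by_cases hedge : s(i, j) = s(a, b)
  · obtain ⟨rfl, rfl⟩ | ⟨rfl, rfl⟩ := Sym2.eq_iff.mp hedge
    · exact iff_of_true hadj (by omega)
    · omega
  · have hadj_iff := adj_iff_of_energy_le hdel
      (fun _ _ => two_le_of_deleteEdges_adj hab hb) hy hxy hlt'
      (by linarith [broomEnergy_self_add (by omega : 2 ≤ m) one_le_two le_rfl y]) hij
    rw [SimpleGraph.deleteEdges_adj, Set.mem_singleton_iff, and_iff_left hedge] at hadj_iff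
    have : ¬ (i.val = 0 ∧ j.val = 1) := fun h => hedge
      (congrArg₂ (s(·, ·)) (Fin.ext (by omega)) (Fin.ext (by omega)))
    rw [hadj_iff]
    omega

lemma exists_monotone_enumeration {W : Type*} [Finite W] (hW : Nat.card W = m) (f : W → ℝ) :
    ∃ (σ : Fin m ≃ W) (y : ℕ → ℝ), Monotone y ∧ ∀ i, f (σ i) = y i := by
  let g : Fin m ≃ W := (Finite.equivFinOfCardEq hW).symm
  let σ := (Tuple.sort (f ∘ g)).trans g
  have hσ : Monotone (f ∘ σ) := Tuple.monotone_sort (f ∘ g)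
  rcases m.eq_zero_or_pos with rfl | hm
  · exact ⟨σ, 0, monotone_const, fun i => i.elim0⟩
  · refine ⟨σ, fun k => f (σ ⟨min k (m - 1), by omega⟩),
      fun i j hij => hσ (Fin.mk_le_mk.mpr (by omega)), fun i => ?_⟩
    simp only [show min i.val (m - 1) = i by omega]

end SortedEnergy

section TestVector

variable {m n K : ℕ} {y z : ℕ → ℝ}

/-- The symmetric bilinear form whose quadratic form is `broomEnergy K n`. -/
def broomPolar (K n : ℕ) (z d : ℕ → ℝ) : ℝ :=
  (z 0 + z 1) * (d 0 + d 1) + (z 2 - z 0) * (d 2 - d 0) +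
    ∑ v ∈ Finset.Ico 2 n, (z v - z (min v K - 1)) * (d v - d (min v K - 1))

lemma broomEnergy_add_smul (K n : ℕ) (z d : ℕ → ℝ) (t : ℝ) :
    broomEnergy K n (z + t • d) =
      broomEnergy K n z + 2 * t * broomPolar K n z d + t ^ 2 * broomEnergy K n d := by
  simp only [broomEnergy, broomPolar, mul_add, Finset.mul_sum, Pi.add_apply, Pi.smul_apply,
    smul_eq_mul]
  rw [Finset.sum_congr rfl fun v _ => show
    (z v + t * d v - (z (min v K - 1) + t * d (min v K - 1))) ^ 2 =
      (z v - z (min v K - 1)) ^ 2 +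
        2 * t * ((z v - z (min v K - 1)) * (d v - d (min v K - 1))) +
        t ^ 2 * (d v - d (min v K - 1)) ^ 2 by ring]
  rw [Finset.sum_add_distrib, Finset.sum_add_distrib]
  ring

lemma sum_sq_add_smul (s : Finset ℕ) (z d : ℕ → ℝ) (t : ℝ) :
    ∑ v ∈ s, (z + t • d) v ^ 2 =
      ∑ v ∈ s, z v ^ 2 + 2 * t * ∑ v ∈ s, z v * d v + t ^ 2 * ∑ v ∈ s, d v ^ 2 := by
  simp only [Finset.mul_sum, ← Finset.sum_add_distrib, Pi.add_apply, Pi.smul_apply, smul_eq_mul]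
  exact Finset.sum_congr rfl fun v _ => by ring

lemma eq_zero_of_forall_nonneg {b c : ℝ} (h : ∀ t : ℝ, 0 ≤ 2 * t * b + t ^ 2 * c) : b = 0 := by
  have hdiscrim : discrim c (2 * b) 0 ≤ 0 := discrim_le_zero fun t => (h t).trans_eq (by ring)
  rw [discrim] at hdiscrim
  nlinarith [sq_nonneg b]

lemma broomPolar_eq_of_broomEnergy_le (hn : 2 ≤ n) (hK : 2 ≤ K)
    (hz : broomEnergy K n z ≤ qmin (triangleBroom n K) * ∑ v ∈ Finset.range n, z v ^ 2)
    (d : ℕ → ℝ) :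
    broomPolar K n z d = qmin (triangleBroom n K) * ∑ v ∈ Finset.range n, z v * d v := by
  refine sub_eq_zero.mp (eq_zero_of_forall_nonneg (c := broomEnergy K n d -
    qmin (triangleBroom n K) * ∑ v ∈ Finset.range n, d v ^ 2) fun t => ?_)
  have := qmin_triangleBroom_mul_le hn hK (z + t • d)
  rw [broomEnergy_add_smul, sum_sq_add_smul] at this
  linarith

lemma broomPolar_single_zero (n : ℕ) (hK : 3 ≤ K) (z : ℕ → ℝ) :
    broomPolar K n z (Pi.single 0 1) = 2 * z 0 + z 1 - z 2 := by
  rw [broomPolar, Finset.sum_eq_zero]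
  · simp only [Pi.single_apply, zero_ne_one.symm, two_ne_zero, if_true, if_false]
    ring
  · intro v hv
    have := Finset.mem_Ico.mp hv
    rw [Pi.single_eq_of_ne (by omega), Pi.single_eq_of_ne (by omega), sub_zero, mul_zero]

lemma broomPolar_single_one (hn : 3 ≤ n) (hK : 3 ≤ K) (z : ℕ → ℝ) :
    broomPolar K n z (Pi.single 1 1) = z 0 + 2 * z 1 - z 2 := by
  rw [broomPolar, Finset.sum_eq_single_of_mem 2 (Finset.mem_Ico.mpr (by omega))]
  · simp only [Pi.single_apply, show min 2 K - 1 = 1 by omega, zero_ne_one, OfNat.ofNat_ne_one,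
      if_true, if_false]
    ring
  · intro v hv hne
    have := Finset.mem_Ico.mp hv
    rw [Pi.single_eq_of_ne (by omega), Pi.single_eq_of_ne (by omega), sub_zero, mul_zero]

lemma broomPolar_tail (hn : K ≤ n) {k : ℕ} (hk : 1 ≤ k) (hkK : k + 1 < K) (z : ℕ → ℝ) :
    broomPolar K n z (fun v => if k < v then 1 else 0) =
      (if k = 1 then z 2 - z 0 else 0) + (z (k + 1) - z k) := by
  rw [broomPolar, Finset.sum_eq_single_of_mem (k + 1) (Finset.mem_Ico.mpr (by omega))]
  · rw [show min (k + 1) K - 1 = k by omega]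
    rcases hk.eq_or_lt with rfl | hk
    · simp
    · simp [show ¬ k < 1 by omega, show ¬ k < 2 by omega, show k ≠ 1 by omega]
  · intro v hv hne
    have := Finset.mem_Ico.mp hv
    simp only [show k < min v K - 1 ↔ k < v by omega, sub_self, mul_zero]

lemma eq_and_eq_mul_of_broomEnergy_le (hn : 5 ≤ n) (hK : 3 ≤ K)
    (hz : broomEnergy K n z ≤ qmin (triangleBroom n K) * ∑ v ∈ Finset.range n, z v ^ 2) :
    z 0 = z 1 ∧ z 2 = (3 - qmin (triangleBroom n K)) * z 0 := by
  have hfirst := broomPolar_eq_of_broomEnergy_le (by omega) (by omega) hz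
  have h0 := hfirst (Pi.single 0 1)
  have h1 := hfirst (Pi.single 1 1)
  simp only [broomPolar_single_zero n hK, Pi.single_apply, mul_ite, mul_one,
    mul_zero, Finset.sum_ite_eq', Finset.mem_range, show 0 < n by omega, if_true] at h0
  simp only [broomPolar_single_one (by omega : 3 ≤ n) hK, Pi.single_apply, mul_ite, mul_one,
    mul_zero, Finset.sum_ite_eq', Finset.mem_range, show 1 < n by omega, if_true] at h1
  have h01 : z 0 = z 1 := by
    have hlt := qmin_triangleBroom_lt_one hn hK
    have : (1 - qmin (triangleBroom n K)) * (z 0 - z 1) = 0 := by linarith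
    rcases mul_eq_zero.mp this with h | h <;> linarith
  exact ⟨h01, by linarith⟩

lemma pos_and_lt_succ_of_broomEnergy_le (hn : 5 ≤ n) (hK : 3 ≤ K) (hKn : K ≤ n) (hz0 : ∀ v, 0 ≤ z v)
    (hlast : 0 < z (n - 1))
    (hz : broomEnergy K n z ≤ qmin (triangleBroom n K) * ∑ v ∈ Finset.range n, z v ^ 2) :
    0 < z 0 ∧ ∀ k, 1 ≤ k → k + 1 < K → z k < z (k + 1) := by
  obtain ⟨h01, h2⟩ := eq_and_eq_mul_of_broomEnergy_le hn hK hz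
  have hstep (k : ℕ) (hk : 1 ≤ k) (hkK : k + 1 < K) : z k < z (k + 1) := by
    have htail : 0 < ∑ v ∈ Finset.range n, z v * (if k < v then 1 else 0) :=
      Finset.sum_pos' (fun v _ => mul_nonneg (hz0 v) (by positivity))
        ⟨n - 1, Finset.mem_range.mpr (by omega), by rwa [if_pos (by omega), mul_one]⟩
    have hpos := mul_pos (qmin_triangleBroom_pos (by omega : 3 ≤ n) (by omega : 2 ≤ K)) htail
    rw [← broomPolar_eq_of_broomEnergy_le (by omega) (by omega) hz,
      broomPolar_tail hKn hk hkK] at hpos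
    split_ifs at hpos with hk1
    · subst hk1
      norm_num at hpos ⊢
      linarith
    · linarith
  refine ⟨(hz0 0).lt_of_ne' fun h0 => ?_, hstep⟩
  have := hstep 1 le_rfl (by omega)
  norm_num at this
  rw [h2, ← h01, h0] at this
  simp at this

/-- The vector equal to `y` on the labels below `m` and to the constant `Y` on all others. -/
def extendConst (m : ℕ) (y : ℕ → ℝ) (Y : ℝ) (v : ℕ) : ℝ :=
  if v < m then y v else Y

lemma extendConst_of_lt {v : ℕ} (hv : v < m) (y : ℕ → ℝ) (Y : ℝ) : extendConst m y Y v = y v :=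
  if_pos hv

lemma extendConst_of_le {v : ℕ} (hv : m ≤ v) (y : ℕ → ℝ) (Y : ℝ) : extendConst m y Y v = Y :=
  if_neg (not_lt.mpr hv)

lemma sum_Ico_const_sq (hmn : m ≤ n) (a : ℝ) :
    ∑ _v ∈ Finset.Ico m n, a ^ 2 = ((n : ℝ) - m) * a ^ 2 := by
  rw [Finset.sum_const, Nat.card_Ico, nsmul_eq_mul, Nat.cast_sub hmn]

lemma sum_sq_extendConst (hmn : m ≤ n) (y : ℕ → ℝ) (Y : ℝ) :
    ∑ v ∈ Finset.range n, extendConst m y Y v ^ 2 =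
      ∑ v ∈ Finset.range m, y v ^ 2 + ((n : ℝ) - m) * Y ^ 2 := by
  rw [← Finset.sum_range_add_sum_Ico _ hmn]
  congr 1
  · exact Finset.sum_congr rfl fun v hv => by rw [extendConst_of_lt (Finset.mem_range.mp hv)]
  · rw [← sum_Ico_const_sq hmn]
    exact Finset.sum_congr rfl fun v hv => by rw [extendConst_of_le (Finset.mem_Ico.mp hv).1]

lemma broomEnergy_extendConst (hm : 3 ≤ m) (hmK : m ≤ K) (hmn : m ≤ n) (y : ℕ → ℝ) (Y : ℝ) :
    broomEnergy K n (extendConst m y Y) = broomEnergy m m y +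
      ∑ v ∈ Finset.Ico m n, (Y - extendConst m y Y (min v K - 1)) ^ 2 := by
  rw [broomEnergy, broomEnergy, extendConst_of_lt (by omega), extendConst_of_lt (by omega),
    extendConst_of_lt (by omega), add_assoc (_ + _),
    ← Finset.sum_Ico_consecutive _ (show 2 ≤ m by omega) hmn]
  congr 2
  · refine Finset.sum_congr rfl fun v hv => ?_
    have := Finset.mem_Ico.mp hv
    rw [show min v K = v by omega, show min v m = v by omega, extendConst_of_lt (by omega),
      extendConst_of_lt (by omega)]
  · exact Finset.sum_congr rfl fun v hv => by rw [extendConst_of_le (Finset.mem_Ico.mp hv).1]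

lemma sq_sub_extendConst_le (hm : 0 < m) (hmK : m ≤ K) (y : ℕ → ℝ) (Y : ℝ) {v : ℕ} (hv : m ≤ v) :
    (Y - extendConst m y Y (min v K - 1)) ^ 2 ≤ (Y - y (m - 1)) ^ 2 := by
  rcases lt_or_ge (min v K - 1) m with h | h
  · rw [extendConst_of_lt h, show min v K - 1 = m - 1 by omega]
  · rw [extendConst_of_le h, sub_self, zero_pow two_ne_zero]
    exact sq_nonneg _

lemma broomEnergy_extendConst_le (hm : 3 ≤ m) (hmK : m ≤ K) (hmn : m ≤ n) (y : ℕ → ℝ) (Y : ℝ) :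
    broomEnergy K n (extendConst m y Y) ≤
      broomEnergy m m y + ((n : ℝ) - m) * (Y - y (m - 1)) ^ 2 := by
  rw [broomEnergy_extendConst hm hmK hmn, ← sum_Ico_const_sq hmn]
  exact add_le_add_right (Finset.sum_le_sum fun v hv =>
    sq_sub_extendConst_le (by omega) hmK y Y (Finset.mem_Ico.mp hv).1) _

lemma broomEnergy_extendConst_lt (hm : 3 ≤ m) (hmK : m < K) (hmn : m + 2 ≤ n) {Y : ℝ}
    (hY : y (m - 1) ≠ Y) : broomEnergy K n (extendConst m y Y) <
      broomEnergy m m y + ((n : ℝ) - m) * (Y - y (m - 1)) ^ 2 := by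
  rw [broomEnergy_extendConst hm hmK.le (by omega), ← sum_Ico_const_sq (by omega)]
  refine add_lt_add_right (Finset.sum_lt_sum
    (fun v hv => sq_sub_extendConst_le (by omega) hmK.le y Y (Finset.mem_Ico.mp hv).1)
    ⟨m + 1, Finset.mem_Ico.mpr (by omega), ?_⟩) _
  rw [extendConst_of_le (by omega), sub_self, zero_pow two_ne_zero]
  exact sq_pos_of_ne_zero (sub_ne_zero.mpr hY.symm)

lemma sq_add_sub_mul_sq {l : ℝ} (hl : l ≠ 1) (t a : ℝ) :
    (t + a) ^ 2 - l * t ^ 2 = (1 - l) * (t + a / (1 - l)) ^ 2 - l / (1 - l) * a ^ 2 := by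
  have : 1 - l ≠ 0 := sub_ne_zero.mpr hl.symm
  field_simp
  ring

lemma sq_div_one_sub_sub {l : ℝ} (hl : l ≠ 1) (a : ℝ) :
    (a / (1 - l) - a) ^ 2 = l * (a / (1 - l)) ^ 2 - l / (1 - l) * a ^ 2 := by
  linear_combination sq_add_sub_mul_sq hl (a / (1 - l)) (-a)

lemma pendant_le_broomEnergy (hm : 3 ≤ m) (hmK : m ≤ K) (hn : 5 ≤ n) (hmn : m ≤ n) (y : ℕ → ℝ) :
    ((n : ℝ) - m) * (qmin (triangleBroom n K) / (1 - qmin (triangleBroom n K)) * y (m - 1) ^ 2) ≤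
      broomEnergy m m y - qmin (triangleBroom n K) * ∑ v ∈ Finset.range m, y v ^ 2 := by
  have htest := (qmin_triangleBroom_mul_le (by omega) (by omega) _).trans
    (broomEnergy_extendConst_le hm hmK hmn y (y (m - 1) / (1 - qmin (triangleBroom n K))))
  rw [sum_sq_extendConst hmn,
    sq_div_one_sub_sub (qmin_triangleBroom_lt_one hn (hm.trans hmK)).ne] at htest
  linarith

lemma tight_of_broomEnergy_le_pendant (hm : 3 ≤ m) (hmK : m ≤ K) (hn : K + 2 ≤ n)
    (hy : Monotone y) (hy0 : 0 ≤ y 0) (hlast : 0 < y (m - 1))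
    (hle : broomEnergy m m y - qmin (triangleBroom n K) * ∑ v ∈ Finset.range m, y v ^ 2 ≤
      ((n : ℝ) - m) *
        (qmin (triangleBroom n K) / (1 - qmin (triangleBroom n K)) * y (m - 1) ^ 2)) :
    m = K ∧ 0 < y 0 ∧ ∀ k, 1 ≤ k → k + 1 < m → y k < y (k + 1) := by
  have hpos := qmin_triangleBroom_pos (by omega : 3 ≤ n) (by omega : 2 ≤ K)
  have hlt := qmin_triangleBroom_lt_one (by omega : 5 ≤ n) (hm.trans hmK)
  have hnorm := sum_sq_extendConst (by omega : m ≤ n) y (y (m - 1) / (1 - qmin (triangleBroom n K)))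
  have hY := sq_div_one_sub_sub hlt.ne (y (m - 1))
  set l := qmin (triangleBroom n K)
  set Y := y (m - 1) / (1 - l)
  have hYlt : y (m - 1) < Y := by
    rw [lt_div_iff₀ (by linarith)]
    nlinarith
  obtain rfl : m = K := by
    by_contra hne
    have := (qmin_triangleBroom_mul_le (n := n) (K := K) (by omega) (by omega) _).trans_lt
      (broomEnergy_extendConst_lt hm (hmK.lt_of_ne hne) (by omega) hYlt.ne)
    rw [hnorm, hY] at this
    linarith
  have htight : broomEnergy m n (extendConst m y Y) ≤
      l * ∑ v ∈ Finset.range n, extendConst m y Y v ^ 2 := by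
    have := broomEnergy_extendConst_le hm le_rfl (by omega : m ≤ n) y Y
    rw [hY] at this
    rw [hnorm]
    linarith
  have hnonneg (v : ℕ) : 0 ≤ extendConst m y Y v := by
    rw [extendConst]
    split_ifs
    exacts [hy0.trans (hy v.zero_le), (hlast.trans hYlt).le]
  obtain ⟨hz0, hstrict⟩ := pos_and_lt_succ_of_broomEnergy_le (by omega) hm (by omega) hnonneg
    (by rw [extendConst_of_le (by omega)]; exact hlast.trans hYlt) htight
  refine ⟨rfl, by rwa [extendConst_of_lt (by omega)] at hz0, fun k hk hkm => ?_⟩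
  have := hstrict k hk hkm
  rwa [extendConst_of_lt (by omega), extendConst_of_lt hkm] at this

end TestVector

section RootedCore

variable {V : Type*} {G : SimpleGraph V}

lemma preconnected_induce_diff_singleton {S : Set V} {v : V} (hS : (G.induce S).Preconnected)
    (hv : (G.neighborSet v ∩ S).Subsingleton) : (G.induce (S \ {v})).Preconnected := by
  rintro ⟨a, haS, hav⟩ ⟨b, hbS, hbv⟩
  have hleaf : ∀ w ∉ {w : S | w.1 ≠ v}, ((G.induce S).neighborSet w).Subsingleton := by
    intro w hw a ha b hb
    obtain rfl : w.1 = v := not_not.mp hw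
    exact Subtype.ext (hv ⟨ha, a.2⟩ ⟨hb, b.2⟩)
  let forget : (G.induce S).induce {w : S | w.1 ≠ v} →g G.induce (S \ {v}) :=
    ⟨fun w => ⟨w.1.1, w.1.2, w.2⟩, id⟩
  exact (hS.induce_of_degree_eq_one hleaf ⟨⟨a, haS⟩, hav⟩ ⟨⟨b, hbS⟩, hbv⟩).map forget

lemma colorable_two_induce_of_diff_singleton {S : Set V} {v : V}
    (hv : (G.neighborSet v ∩ S).Subsingleton) (hcol : (G.induce (S \ {v})).Colorable 2) :
    (G.induce S).Colorable 2 := by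
  obtain ⟨c, hc⟩ := colorable_two_iff.mp hcol
  let colorAt : Bool := decide (∃ u : ↥(S \ {v}), G.Adj v u ∧ c u = false)
  have hcolorAt (u : ↥(S \ {v})) (hu : G.Adj v u) : colorAt ≠ c u := by
    have huniq (w : ↥(S \ {v})) (hw : G.Adj v w) : w = u :=
      Subtype.ext (hv ⟨hw, w.2.1⟩ ⟨hu, u.2.1⟩)
    have hiff : (∃ w : ↥(S \ {v}), G.Adj v w ∧ c w = false) ↔ c u = false :=
      ⟨fun ⟨w, hw, hcw⟩ => huniq w hw ▸ hcw, fun h => ⟨u, hu, h⟩⟩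
    simp only [colorAt, hiff]
    cases c u <;> decide
  rw [colorable_two_iff]
  refine ⟨fun w => if hw : w.1 ≠ v then c ⟨w, w.2, hw⟩ else colorAt, fun a b hab => ?_⟩
  by_cases ha : a.1 = v <;> by_cases hb : b.1 = v
  · exact absurd (Subtype.ext (ha.trans hb.symm)) hab.ne
  · simpa [ha, hb] using hcolorAt ⟨b, b.2, hb⟩ (ha ▸ hab)
  · simpa [ha, hb] using (hcolorAt ⟨a, a.2, ha⟩ (hb ▸ hab.symm)).symm
  · simpa [ha, hb] using hc ⟨a, a.2, ha⟩ ⟨b, b.2, hb⟩ hab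

lemma exists_adj_dist_lt (hconn : G.Connected) {u p : V} (hu : u ≠ p) :
    ∃ w, G.Adj u w ∧ G.dist w p < G.dist u p := by
  obtain ⟨walk, hwalk⟩ := hconn.exists_walk_length_eq_dist u p
  have hnil : ¬ walk.Nil := SimpleGraph.Walk.not_nil_of_ne hu
  refine ⟨walk.snd, walk.adj_snd hnil, ?_⟩
  have := walk.length_tail_add_one hnil
  have := SimpleGraph.dist_le walk.tail
  omega

/-- The number of neighbours of `v` in `S`; for `v ∈ S` this is its degree in the subgraph induced
by `S`. -/
noncomputable def degreeIn (G : SimpleGraph V) (S : Finset V) (v : V) : ℕ :=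
  Finset.card {w ∈ S | G.Adj v w}

/-- A nonbipartite core `S` of `G` rooted at `p`: an induced connected nonbipartite subgraph
through `p` in which no vertex but possibly `p` is a leaf. The vertices outside `S` are attached
by `parent`, which sends each of them to a neighbour closer to `p`; its values on `S` are
irrelevant. -/
structure RootedCore (G : SimpleGraph V) (p : V) (S : Finset V) (parent : V → V) : Prop where
  root_mem : p ∈ S
  connected : (G.induce (S : Set V)).Connected
  not_colorable : ¬ (G.induce (S : Set V)).Colorable 2
  two_le : ∀ v ∈ S, v ≠ p → 2 ≤ degreeIn G S v
  adj_parent : ∀ u ∉ S, G.Adj u (parent u)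
  dist_parent_lt : ∀ u ∉ S, G.dist (parent u) p < G.dist u p

lemma exists_rootedCore [Finite V] (hconn : G.Connected) (hG : ¬ G.Colorable 2) (p : V) :
    ∃ S parent, RootedCore G p S parent := by
  have := Fintype.ofFinite V
  obtain ⟨S, ⟨hpS, hS, hcol⟩, hmin⟩ := exists_minimal_of_wellFoundedLT
    (fun S : Finset V => p ∈ S ∧ (G.induce (S : Set V)).Connected ∧
      ¬ (G.induce (S : Set V)).Colorable 2)
    ⟨Finset.univ, Finset.mem_univ p, by
      rw [Finset.coe_univ]
      exact ⟨(SimpleGraph.induceUnivIso G).connected_iff.mpr hconn,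
        fun h => hG (h.of_hom (SimpleGraph.induceUnivIso G).symm.toHom)⟩⟩
  have : Nonempty V := ⟨p⟩
  choose! parent hparent using fun u (hu : u ≠ p) => exists_adj_dist_lt hconn hu
  have hne {u : V} (hu : u ∉ S) : u ≠ p := fun h => hu (h ▸ hpS)
  refine ⟨S, parent, hpS, hS, hcol, fun v hv hvp => ?_,
    fun u hu => (hparent u (hne hu)).1, fun u hu => (hparent u (hne hu)).2⟩
  by_contra! hlt
  have hleaf : (G.neighborSet v ∩ S).Subsingleton := fun a ha b hb =>
    Finset.card_le_one.mp (Nat.lt_succ_iff.mp hlt) a (by simpa using ha.symm) b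
      (by simpa using hb.symm)
  have hp : p ∈ S.erase v := Finset.mem_erase.mpr ⟨hvp.symm, hpS⟩
  refine Finset.notMem_erase v S (hmin ⟨hp, ?_⟩ (S.erase_subset v) hv)
  rw [Finset.coe_erase]
  exact ⟨(SimpleGraph.connected_iff _).mpr
    ⟨preconnected_induce_diff_singleton hS.preconnected hleaf, ⟨p, hpS, hvp.symm⟩⟩,
    fun h => hcol (colorable_two_induce_of_diff_singleton hleaf h)⟩

lemma card_filter_edgeFinset_mem [Fintype V] (G : SimpleGraph V) (S : Finset V) :
    Finset.card {e ∈ G.edgeFinset | ∀ w ∈ e, w ∈ S} = (G.induce (S : Set V)).edgeSet.ncard := by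
  rw [← card_filter_edgeFinset_range (SimpleGraph.Embedding.induce (G := G) (S : Set V))]
  simp

lemma degreeIn_le_degree [Fintype V] (G : SimpleGraph V) (S : Finset V) (v : V) :
    degreeIn G S v ≤ G.degree v :=
  Finset.card_le_card fun w hw => by simpa using (Finset.mem_filter.mp hw).2

lemma sum_degreeIn (G : SimpleGraph V) (S : Finset V) :
    ∑ v ∈ S, degreeIn G S v = 2 * (G.induce (S : Set V)).edgeSet.ncard := by
  have hsum := (G.induce (S : Set V)).sum_degrees_eq_twice_card_edges
  rw [← SimpleGraph.coe_edgeFinset, Set.ncard_coe_finset, ← hsum,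
    Finset.sum_subtype S (p := (· ∈ (S : Set V))) (by simp)]
  refine Finset.sum_congr rfl fun v _ => ?_
  rw [degreeIn, ← SimpleGraph.card_neighborFinset_eq_degree,
    ← Finset.card_map (.subtype (· ∈ (S : Set V)))]
  congr 1
  ext w
  simp [and_comm]

lemma ncard_edgeSet_induce_add_card_filter_not [Fintype V]
    (G : SimpleGraph V) (S : Finset V) : (G.induce (S : Set V)).edgeSet.ncard +
      Finset.card {e ∈ G.edgeFinset | ¬ ∀ w ∈ e, w ∈ S} = G.edgeSet.ncard := by
  rw [← card_filter_edgeFinset_mem, Finset.card_filter_add_card_filter_not,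
    ← G.coe_edgeFinset, Set.ncard_coe_finset]

namespace RootedCore

variable {p : V} {S : Finset V} {parent : V → V}

lemma injOn_edge_parent (h : RootedCore G p S parent) :
    Set.InjOn (fun u => s(u, parent u)) {u | u ∉ S} := by
  intro u hu v hv huv
  rcases Sym2.eq_iff.mp huv with ⟨huv, -⟩ | ⟨hup, hpu⟩
  · exact huv
  · have hlt := (hup ▸ h.dist_parent_lt v hv : G.dist u p < G.dist v p)
    exact absurd (hpu ▸ h.dist_parent_lt u hu) hlt.not_gt

lemma three_le_card (h : RootedCore G p S parent) : 3 ≤ S.card := by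
  by_contra! hlt
  have := (G.induce (S : Set V)).colorable_of_fintype
  rw [Fintype.card_eq_nat_card, Nat.card_coe_set_eq, Set.ncard_coe_finset] at this
  exact h.not_colorable (this.mono (by omega))

lemma card_le_ncard_edgeSet (h : RootedCore G p S parent) :
    S.card ≤ (G.induce (S : Set V)).edgeSet.ncard := by
  have := _root_.card_le_ncard_edgeSet h.connected h.not_colorable
  rwa [Nat.card_coe_set_eq, Set.ncard_coe_finset] at this

variable [Fintype V]

lemma image_parent_subset (h : RootedCore G p S parent) :
    (Sᶜ.image fun u => s(u, parent u)) ⊆ {e ∈ G.edgeFinset | ¬ ∀ w ∈ e, w ∈ S} := by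
  intro e he
  obtain ⟨u, hu, rfl⟩ := Finset.mem_image.mp he
  have hu := Finset.mem_compl.mp hu
  exact Finset.mem_filter.mpr ⟨SimpleGraph.mem_edgeFinset.mpr (h.adj_parent u hu),
    fun hall => hu (hall u (Sym2.mem_mk_left _ _))⟩

lemma card_image_parent (h : RootedCore G p S parent) :
    (Sᶜ.image fun u => s(u, parent u)).card = Fintype.card V - S.card := by
  rw [Finset.card_image_of_injOn fun u hu v hv =>
    h.injOn_edge_parent (Finset.mem_compl.mp hu) (Finset.mem_compl.mp hv), Finset.card_compl]

lemma ncard_edgeSet_eq (h : RootedCore G p S parent) (huni : G.edgeSet.ncard = Fintype.card V) :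
    (G.induce (S : Set V)).edgeSet.ncard = S.card := by
  have := Finset.card_le_card h.image_parent_subset
  rw [h.card_image_parent] at this
  have := ncard_edgeSet_induce_add_card_filter_not G S
  have := h.card_le_ncard_edgeSet
  have := S.card_le_univ
  omega

lemma filter_not_mem_eq_image_parent (h : RootedCore G p S parent)
    (huni : G.edgeSet.ncard = Fintype.card V) :
    {e ∈ G.edgeFinset | ¬ ∀ w ∈ e, w ∈ S} = Sᶜ.image fun u => s(u, parent u) := by
  refine (Finset.eq_of_subset_of_card_le h.image_parent_subset ?_).symm
  rw [h.card_image_parent]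
  have := ncard_edgeSet_induce_add_card_filter_not G S
  have := h.card_le_ncard_edgeSet
  omega

lemma adj_iff_of_notMem (h : RootedCore G p S parent) (huni : G.edgeSet.ncard = Fintype.card V)
    {u v : V} (hu : u ∉ S) : G.Adj u v ↔ v = parent u ∨ v ∉ S ∧ u = parent v := by
  have hmem : s(u, v) ∈ ({e ∈ G.edgeFinset | ¬ ∀ w ∈ e, w ∈ S} : Finset (Sym2 V)) ↔ G.Adj u v := by
    simp [hu]
  rw [← hmem, h.filter_not_mem_eq_image_parent huni]
  simp only [Finset.mem_image, Finset.mem_compl, Sym2.eq_iff]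
  constructor
  · rintro ⟨w, hw, ⟨rfl, rfl⟩ | ⟨rfl, rfl⟩⟩
    exacts [.inl rfl, .inr ⟨hw, rfl⟩]
  · rintro (rfl | ⟨hv, rfl⟩)
    exacts [⟨u, hu, .inl ⟨rfl, rfl⟩⟩, ⟨v, hv, .inr ⟨rfl, rfl⟩⟩]

lemma eq_parent_of_adj (h : RootedCore G p S parent) (huni : G.edgeSet.ncard = Fintype.card V)
    {u v : V} (hu : u ∉ S) (hv : v ∈ S) (huv : G.Adj u v) : v = parent u :=
  ((h.adj_iff_of_notMem huni hu).mp huv).resolve_right fun hvS => hvS.1 hv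

lemma two_le_degree_of_mem (h : RootedCore G p S parent) (hp : 2 ≤ G.degree p) {v : V}
    (hv : v ∈ S) : 2 ≤ G.degree v := by
  rcases eq_or_ne v p with rfl | hvp
  · exact hp
  · exact (h.two_le v hv hvp).trans (degreeIn_le_degree G S v)

lemma two_le_degree_parent (h : RootedCore G p S parent) (hp : 2 ≤ G.degree p) {u : V}
    (hu : u ∉ S) : 2 ≤ G.degree (parent u) := by
  by_cases hpar : parent u ∈ S
  · exact h.two_le_degree_of_mem hp hpar
  · have hne : u ≠ parent (parent u) := fun heq =>
      ((h.dist_parent_lt u hu).trans (by simpa [← heq] using h.dist_parent_lt _ hpar)).false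
    rw [← Finset.card_pair hne]
    refine Finset.card_le_card (Finset.insert_subset ?_ (Finset.singleton_subset_iff.mpr ?_))
    · simpa using (h.adj_parent u hu).symm
    · simpa using h.adj_parent _ hpar

lemma sum_degreeIn_sub_two (h : RootedCore G p S parent) (huni : G.edgeSet.ncard = Fintype.card V) :
    ∑ v ∈ S, ((degreeIn G S v : ℤ) - 2) = 0 := by
  have := sum_degreeIn G S
  rw [h.ncard_edgeSet_eq huni] at this
  rw [Finset.sum_sub_distrib, ← Nat.cast_sum, this]
  simp [mul_comm]

lemma two_le_degreeIn_root (h : RootedCore G p S parent)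
    (huni : G.edgeSet.ncard = Fintype.card V) (hp : 2 ≤ G.degree p) {D : Finset V}
    (hD : IsDominatingSet G D) (hDS : D ⊆ S) (hpD : p ∉ D) : 2 ≤ degreeIn G S p := by
  refine hp.trans (Finset.card_le_card fun q hq => ?_)
  have hq : G.Adj p q := by simpa using hq
  refine Finset.mem_filter.mpr ⟨by_contra fun hqS => ?_, hq⟩
  obtain ⟨d, hd, hdq⟩ := hD q fun hqD => hqS (hDS hqD)
  rw [h.eq_parent_of_adj huni hqS (hDS hd) hdq.symm,
    ← h.eq_parent_of_adj huni hqS h.root_mem hq.symm] at hd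
  exact hpD hd

lemma sum_degreeIn_sub_two_le (h : RootedCore G p S parent)
    (huni : G.edgeSet.ncard = Fintype.card V) (hp : 2 ≤ G.degree p) {D : Finset V}
    (hD : IsDominatingSet G D) :
    ∑ v ∈ D ∩ S, ((degreeIn G S v : ℤ) - 2) ≤ 2 * (D \ S).card := by
  have hzero := h.sum_degreeIn_sub_two huni
  have hnonneg (v : V) (hv : v ∈ S) (hvp : v ≠ p) : 0 ≤ (degreeIn G S v : ℤ) - 2 := by
    have := h.two_le v hv hvp
    omega
  by_cases hpD : p ∈ D
  · calc ∑ v ∈ D ∩ S, ((degreeIn G S v : ℤ) - 2)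
        ≤ ∑ v ∈ S, ((degreeIn G S v : ℤ) - 2) :=
          Finset.sum_le_sum_of_subset_of_nonneg Finset.inter_subset_right fun v hv hvD =>
            hnonneg v hv (by rintro rfl; exact hvD (Finset.mem_inter.mpr ⟨hpD, hv⟩))
      _ ≤ 2 * (D \ S).card := by rw [hzero]; positivity
  · have hle : ∑ v ∈ D ∩ S, ((degreeIn G S v : ℤ) - 2) ≤ 2 - degreeIn G S p := by
      calc ∑ v ∈ D ∩ S, ((degreeIn G S v : ℤ) - 2)
          ≤ ∑ v ∈ S.erase p, ((degreeIn G S v : ℤ) - 2) := by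
            refine Finset.sum_le_sum_of_subset_of_nonneg (fun v hv => ?_) fun v hv _ =>
              hnonneg v (Finset.mem_of_mem_erase hv) (Finset.ne_of_mem_erase hv)
            have hv := Finset.mem_inter.mp hv
            exact Finset.mem_erase.mpr ⟨by rintro rfl; exact hpD hv.1, hv.2⟩
        _ = 2 - degreeIn G S p := by
            have := Finset.add_sum_erase S (fun v => (degreeIn G S v : ℤ) - 2) h.root_mem
            linarith
    rcases (D \ S).eq_empty_or_nonempty with hDS | hDS
    · have := h.two_le_degreeIn_root huni hp hD (Finset.sdiff_eq_empty_iff_subset.mp hDS) hpD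
      omega
    · have := hDS.card_pos
      omega

lemma card_filter_closedNeighborhood_le (h : RootedCore G p S parent)
    (huni : G.edgeSet.ncard = Fintype.card V) (d : V) :
    Finset.card {v ∈ S | v = d ∨ G.Adj v d} ≤ if d ∈ S then degreeIn G S d + 1 else 1 := by
  split_ifs with hd
  · rw [Finset.filter_or, add_comm]
    refine (Finset.card_union_le _ _).trans (add_le_add ?_ (Finset.card_le_card fun v hv => ?_))
    · exact Finset.card_le_one.mpr (by simp +contextual)
    · simpa [SimpleGraph.adj_comm] using hv
  · suffices ∀ v ∈ ({v ∈ S | v = d ∨ G.Adj v d} : Finset V), v = parent d from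
      Finset.card_le_one.mpr fun v hv w hw => (this v hv).trans (this w hw).symm
    intro v hv
    obtain ⟨hvS, rfl | hvd⟩ := Finset.mem_filter.mp hv
    · exact absurd hvS hd
    · exact h.eq_parent_of_adj huni hd hvS hvd.symm

lemma card_le_three_mul (h : RootedCore G p S parent) (huni : G.edgeSet.ncard = Fintype.card V)
    (hp : 2 ≤ G.degree p) {D : Finset V} (hD : IsDominatingSet G D) : S.card ≤ 3 * D.card := by
  have hcover : S ⊆ D.biUnion fun d => {v ∈ S | v = d ∨ G.Adj v d} := fun v hv => by
    by_cases hvD : v ∈ D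
    · exact Finset.mem_biUnion.mpr ⟨v, hvD, by simp [hv]⟩
    · obtain ⟨d, hd, hdv⟩ := hD v hvD
      exact Finset.mem_biUnion.mpr ⟨d, hd, by simp [hv, hdv.symm]⟩
  have hcount : S.card ≤ ∑ d ∈ D ∩ S, (degreeIn G S d + 1) + (D \ S).card := by
    calc S.card ≤ ∑ d ∈ D, if d ∈ S then degreeIn G S d + 1 else 1 :=
          (Finset.card_le_card hcover).trans <| Finset.card_biUnion_le.trans <|
            Finset.sum_le_sum fun d _ => h.card_filter_closedNeighborhood_le huni d
      _ = _ := by simp [Finset.sum_ite, Finset.filter_mem_eq_inter, Finset.filter_notMem_eq_sdiff]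
  have hsum := h.sum_degreeIn_sub_two_le huni hp hD
  have hcard := Finset.card_inter_add_card_sdiff D S
  simp only [Finset.sum_sub_distrib, Finset.sum_add_distrib, Finset.sum_const, smul_eq_mul,
    nsmul_eq_mul, ← Nat.cast_sum] at hsum hcount
  omega

lemma energy_eq (h : RootedCore G p S parent) (huni : G.edgeSet.ncard = Fintype.card V)
    (x : V → ℝ) : energy G x = energy (G.induce (S : Set V)) (x ∘ Subtype.val) +
      ∑ u ∈ Sᶜ, (x u + x (parent u)) ^ 2 := by
  have hcore : energy (G.induce (S : Set V)) (x ∘ Subtype.val) =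
      ∑ e ∈ G.edgeFinset with ∀ w ∈ e, w ∈ S, edgeTerm x e :=
    (energy_comp_embedding (SimpleGraph.Embedding.induce (G := G) (S : Set V)) x).trans (by simp)
  rw [hcore, energy, ← Finset.sum_filter_add_sum_filter_not _ (fun e => ∀ w ∈ e, w ∈ S),
    h.filter_not_mem_eq_image_parent huni, Finset.sum_image fun u hu v hv =>
      h.injOn_edge_parent (Finset.mem_compl.mp hu) (Finset.mem_compl.mp hv)]
  simp only [edgeTerm_mk]

end RootedCore

end RootedCore

section SortedCore

lemma sq_add_sub_mul_sq_add_nonneg {l t a Y : ℝ} (hl0 : 0 ≤ l) (hl1 : l < 1) (ha : |a| ≤ Y) :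
    0 ≤ (t + a) ^ 2 - l * t ^ 2 + l / (1 - l) * Y ^ 2 := by
  have hl : 0 < 1 - l := sub_pos.mpr hl1
  have hsq : 0 ≤ (1 - l) * (t + a / (1 - l)) ^ 2 := by positivity
  have haY := mul_le_mul_of_nonneg_left (sq_le_sq' (abs_le.mp ha).1 (abs_le.mp ha).2)
    (div_nonneg hl0 hl.le)
  rw [sq_add_sub_mul_sq hl1.ne]
  linarith

lemma abs_eq_of_sq_add_sub_mul_sq_add_eq_zero {l t a Y : ℝ} (hl0 : 0 < l) (hl1 : l < 1)
    (ha : |a| ≤ Y) (hzero : (t + a) ^ 2 - l * t ^ 2 + l / (1 - l) * Y ^ 2 = 0) :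
    |a| = Y ∧ |t| = Y / (1 - l) := by
  have hl : 0 < 1 - l := sub_pos.mpr hl1
  have hc : 0 < l / (1 - l) := div_pos hl0 hl
  have haY : |a| = Y := by
    by_contra hne
    have := sq_lt_sq' (neg_lt_of_abs_lt (ha.lt_of_ne hne)) (lt_of_abs_lt (ha.lt_of_ne hne))
    have := sq_add_sub_mul_sq_add_nonneg (t := t) hl0.le hl1 le_rfl (a := a)
    rw [sq_abs] at this
    nlinarith
  refine ⟨haY, ?_⟩
  rw [sq_add_sub_mul_sq hl1.ne, ← haY, sq_abs, sub_add_cancel] at hzero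
  have ht : t = -(a / (1 - l)) :=
    eq_neg_of_add_eq_zero_left (pow_eq_zero_iff two_ne_zero |>.mp <|
      (mul_eq_zero_iff_left hl.ne').mp hzero)
  rw [ht, abs_neg, abs_div, haY, abs_of_pos hl]

variable {V : Type*} [Fintype V] {G : SimpleGraph V}

lemma exists_two_le_degree (hconn : G.Connected) (hG : ¬ G.Colorable 2) :
    ∃ v, 2 ≤ G.degree v := by
  obtain ⟨p⟩ := hconn.nonempty
  obtain ⟨S, parent, h⟩ := exists_rootedCore hconn hG p
  obtain ⟨v, hv, hvp⟩ := Finset.exists_mem_ne (by have := h.three_le_card; omega : 1 < S.card) p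
  exact ⟨v, (h.two_le v hv hvp).trans (degreeIn_le_degree G S v)⟩

/-- A core of the unicyclic graph `G` rooted at a vertex of degree at least two on which `|x|` is
largest among all such vertices, together with the values of `|x|` on the core, listed increasingly
as `y 0 ≤ y 1 ≤ ⋯` by the enumeration `σ`. Only the values `y k` with `k < S.card` matter. -/
structure SortedCore (G : SimpleGraph V) (x : V → ℝ) (p : V) (S : Finset V) (parent : V → V)
    (σ : Fin S.card ≃ (S : Set V)) (y : ℕ → ℝ) : Prop extends RootedCore G p S parent where
  ncard_edgeSet : G.edgeSet.ncard = Fintype.card V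
  two_le_degree : 2 ≤ G.degree p
  abs_le : ∀ v, 2 ≤ G.degree v → |x v| ≤ |x p|
  monotone : Monotone y
  abs_eq : ∀ i, |x (σ i)| = y i

lemma exists_sortedCore (hconn : G.Connected) (hG : ¬ G.Colorable 2)
    (huni : G.edgeSet.ncard = Fintype.card V) (x : V → ℝ) :
    ∃ p S parent σ y, SortedCore G x p S parent σ y := by
  obtain ⟨v, hv⟩ := exists_two_le_degree hconn hG
  obtain ⟨p, hp, hmax⟩ := Finset.exists_max_image {v | 2 ≤ G.degree v} (fun v => |x v|)
    ⟨v, by simpa using hv⟩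
  obtain ⟨S, parent, h⟩ := exists_rootedCore hconn hG p
  obtain ⟨σ, y, hy, hσ⟩ := exists_monotone_enumeration
    ((Nat.card_coe_set_eq _).trans (Set.ncard_coe_finset S)) fun v : (S : Set V) => |x v|
  exact ⟨p, S, parent, σ, y, h, huni, by simpa using hp,
    fun v hv => hmax v (by simpa using hv), hy, hσ⟩

lemma exists_equiv_extending {S : Finset V} (σ : Fin S.card ≃ (S : Set V)) :
    ∃ τ : Fin (Fintype.card V) ≃ V,
      (∀ i (hi : i.val < S.card), τ i = σ ⟨i, hi⟩) ∧ ∀ j, τ j ∈ S ↔ j.val < S.card := by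
  let e := (Fintype.equivFin V).symm
  obtain ⟨π, hπ⟩ := Equiv.Perm.exists_extending_pair (Fin.castLE S.card_le_univ)
    (fun i => e.symm (σ i)) (Fin.castLE_injective _)
    (e.symm.injective.comp (Subtype.val_injective.comp σ.injective))
  have hτ (i : Fin S.card) : (π.trans e) (Fin.castLE S.card_le_univ i) = σ i := by
    rw [Equiv.trans_apply, hπ, e.apply_symm_apply]
  refine ⟨π.trans e, fun i hi => hτ ⟨i, hi⟩, fun j => ⟨fun hmem => ?_, fun hj => ?_⟩⟩
  · obtain ⟨i, hi⟩ := σ.surjective ⟨_, hmem⟩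
    have hij := (hτ i).trans (congrArg Subtype.val hi)
    exact (π.trans e).injective hij ▸ i.2
  · rw [show (π.trans e) j = σ ⟨j, hj⟩ from hτ ⟨j, hj⟩]
    exact (σ ⟨j, hj⟩).2

namespace SortedCore

variable {x : V → ℝ} {p : V} {S : Finset V} {parent : V → V} {σ : Fin S.card ≃ (S : Set V)}
  {y : ℕ → ℝ}

lemma nonneg_zero (h : SortedCore G x p S parent σ y) : 0 ≤ y 0 := by
  have := h.three_le_card
  exact (abs_nonneg _).trans_eq (h.abs_eq ⟨0, by omega⟩)

lemma abs_root (h : SortedCore G x p S parent σ y) : |x p| = y (S.card - 1) := by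
  have := h.three_le_card
  apply le_antisymm
  · obtain ⟨i, hi⟩ := σ.surjective ⟨p, h.root_mem⟩
    calc |x p| = y i := by rw [← h.abs_eq, hi]
      _ ≤ y (S.card - 1) := h.monotone (by omega)
  · rw [← h.abs_eq ⟨S.card - 1, by omega⟩]
    exact h.abs_le _ (h.two_le_degree_of_mem h.two_le_degree (σ _).2)

lemma abs_parent_le (h : SortedCore G x p S parent σ y) {u : V} (hu : u ∉ S) :
    |x (parent u)| ≤ y (S.card - 1) :=
  (h.abs_le _ (h.two_le_degree_parent h.two_le_degree hu)).trans_eq h.abs_root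

lemma sum_sq_eq (h : SortedCore G x p S parent σ y) :
    ∑ v, x v ^ 2 = ∑ k ∈ Finset.range S.card, y k ^ 2 + ∑ u ∈ Sᶜ, x u ^ 2 := by
  have hcore : ∑ v ∈ S, x v ^ 2 = ∑ i : Fin S.card, x (σ i) ^ 2 := by
    rw [Equiv.sum_comp σ fun v : (S : Set V) => x v ^ 2]
    exact Finset.sum_subtype S (p := (· ∈ (S : Set V))) (by simp) _
  rw [← Finset.sum_add_sum_compl S, hcore, Finset.sum_range]
  congr 1
  exact Finset.sum_congr rfl fun i _ => by rw [← h.abs_eq, sq_abs]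

lemma connected_comap (h : SortedCore G x p S parent σ y) :
    ((G.induce (S : Set V)).comap σ).Connected :=
  (SimpleGraph.Iso.comap σ (G.induce (S : Set V))).connected_iff.mpr h.connected

lemma not_colorable_comap (h : SortedCore G x p S parent σ y) :
    ¬ ((G.induce (S : Set V)).comap σ).Colorable 2 := fun hcol =>
  h.not_colorable (hcol.of_hom (SimpleGraph.Iso.comap σ (G.induce (S : Set V))).symm.toHom)

lemma broomEnergy_le (h : SortedCore G x p S parent σ y) :
    broomEnergy S.card S.card y ≤ energy (G.induce (S : Set V)) (x ∘ Subtype.val) :=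
  (broomEnergy_le_energy h.three_le_card h.connected_comap h.not_colorable_comap h.monotone
    h.abs_eq).trans_eq (energy_comap_equiv σ _ (x ∘ Subtype.val))

lemma energy_sub_eq (h : SortedCore G x p S parent σ y) (l c : ℝ) :
    energy G x - l * ∑ v, x v ^ 2 =
      (energy (G.induce (S : Set V)) (x ∘ Subtype.val) - broomEnergy S.card S.card y) +
      (broomEnergy S.card S.card y - l * ∑ k ∈ Finset.range S.card, y k ^ 2 -
        ((Fintype.card V : ℝ) - S.card) * c) +
      ∑ u ∈ Sᶜ, ((x u + x (parent u)) ^ 2 - l * x u ^ 2 + c) := by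
  have hcard : (Sᶜ.card : ℝ) = (Fintype.card V : ℝ) - S.card := by
    rw [Finset.card_compl, Nat.cast_sub S.card_le_univ]
  rw [h.energy_eq h.ncard_edgeSet, h.sum_sq_eq, Finset.sum_add_distrib, Finset.sum_sub_distrib,
    ← Finset.mul_sum, Finset.sum_const, nsmul_eq_mul, hcard]
  ring

lemma qmin_triangleBroom_mul_le_energy (h : SortedCore G x p S parent σ y) {K : ℕ}
    (hK : S.card ≤ K) (hn : 5 ≤ Fintype.card V) :
    qmin (triangleBroom (Fintype.card V) K) * ∑ v, x v ^ 2 ≤ energy G x := by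
  have hm := h.three_le_card
  have hl0 := qmin_triangleBroom_pos (n := Fintype.card V) (K := K) (by omega) (by omega)
  have hl1 := qmin_triangleBroom_lt_one hn (hm.trans hK)
  have hpendant := Finset.sum_nonneg fun u (hu : u ∈ Sᶜ) =>
    sq_add_sub_mul_sq_add_nonneg (t := x u) hl0.le hl1 (h.abs_parent_le (Finset.mem_compl.mp hu))
  have hbroom := pendant_le_broomEnergy hm hK hn S.card_le_univ y
  set l := qmin (triangleBroom (Fintype.card V) K)
  linarith [h.energy_sub_eq l (l / (1 - l) * y (S.card - 1) ^ 2), h.broomEnergy_le]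

lemma tight_of_energy_le (h : SortedCore G x p S parent σ y) {K : ℕ} (hK : S.card ≤ K)
    (hn : 5 ≤ Fintype.card V) {l : ℝ} (hl : qmin (triangleBroom (Fintype.card V) K) = l)
    (hle : energy G x ≤ l * ∑ v, x v ^ 2) :
    energy (G.induce (S : Set V)) (x ∘ Subtype.val) ≤ broomEnergy S.card S.card y ∧
      broomEnergy S.card S.card y - l * ∑ k ∈ Finset.range S.card, y k ^ 2 ≤
        ((Fintype.card V : ℝ) - S.card) * (l / (1 - l) * y (S.card - 1) ^ 2) ∧
      ∀ u ∉ S, |x (parent u)| = y (S.card - 1) ∧ |x u| = y (S.card - 1) / (1 - l) := by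
  have hm := h.three_le_card
  have hl0 := hl ▸ qmin_triangleBroom_pos (n := Fintype.card V) (K := K) (by omega) (by omega)
  have hl1 := hl ▸ qmin_triangleBroom_lt_one hn (hm.trans hK)
  have hterm (u : V) (hu : u ∈ Sᶜ) := sq_add_sub_mul_sq_add_nonneg (t := x u) hl0.le hl1
    (h.abs_parent_le (Finset.mem_compl.mp hu))
  have hpendant := Finset.sum_nonneg hterm
  have hbroom := hl ▸ pendant_le_broomEnergy hm hK hn S.card_le_univ y
  have hcore := h.broomEnergy_le
  have hsub := h.energy_sub_eq l (l / (1 - l) * y (S.card - 1) ^ 2)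
  refine ⟨by linarith, by linarith, fun u hu => ?_⟩
  have hzero := (Finset.sum_eq_zero_iff_of_nonneg hterm).mp (by linarith)
  exact abs_eq_of_sq_add_sub_mul_sq_add_eq_zero hl0 hl1 (h.abs_parent_le hu)
    (hzero u (Finset.mem_compl.mpr hu))

lemma last_pos (h : SortedCore G x p S parent σ y) (hx : x ≠ 0) {l : ℝ}
    (hout : ∀ u ∉ S, |x u| = y (S.card - 1) / (1 - l)) : 0 < y (S.card - 1) := by
  rw [← h.abs_root]
  by_contra! hle
  have hroot : |x p| = 0 := hle.antisymm (abs_nonneg _)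
  refine hx (funext fun v => abs_eq_zero.mp ?_)
  by_cases hv : v ∈ S
  · exact ((h.abs_le v (h.two_le_degree_of_mem h.two_le_degree hv)).trans hle).antisymm
      (abs_nonneg _)
  · rw [hout v hv, ← h.abs_root, hroot, zero_div]

lemma eq_last_of_abs_eq (h : SortedCore G x p S parent σ y)
    (hstrict : ∀ k, 1 ≤ k → k + 1 < S.card → y k < y (k + 1)) {i : Fin S.card}
    (hi : y i = y (S.card - 1)) : i.val = S.card - 1 := by
  have hm := h.three_le_card
  by_contra hne
  have hlt := hstrict (S.card - 2) (by omega) (by omega)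
  rw [show S.card - 2 + 1 = S.card - 1 by omega] at hlt
  exact (((h.monotone (by omega : i.val ≤ S.card - 2)).trans_lt hlt).ne hi).elim

lemma parent_eq_last (h : SortedCore G x p S parent σ y)
    (hstrict : ∀ k, 1 ≤ k → k + 1 < S.card → y k < y (k + 1)) {l : ℝ}
    (hl0 : 0 < l) (hl1 : l < 1) (hlast : 0 < y (S.card - 1))
    (hout : ∀ u ∉ S, |x (parent u)| = y (S.card - 1) ∧ |x u| = y (S.card - 1) / (1 - l))
    {u : V} (hu : u ∉ S) : ∃ i : Fin S.card, i.val = S.card - 1 ∧ parent u = σ i := by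
  have hmem : parent u ∈ S := by
    by_contra hpar
    have hY := (hout u hu).1.symm.trans (hout _ hpar).2
    rw [eq_div_iff (sub_pos.mpr hl1).ne'] at hY
    nlinarith
  obtain ⟨i, hi⟩ := σ.surjective ⟨parent u, hmem⟩
  refine ⟨i, h.eq_last_of_abs_eq hstrict ?_, by rw [hi]⟩
  rw [← h.abs_eq, hi, (hout u hu).1]

lemma nonempty_iso_triangleBroom (h : SortedCore G x p S parent σ y)
    (hcore : (G.induce (S : Set V)).comap σ = triangleBroom S.card S.card)
    (hparent : ∀ u ∉ S, ∃ i : Fin S.card, i.val = S.card - 1 ∧ parent u = σ i) :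
    Nonempty (G ≃g triangleBroom (Fintype.card V) S.card) := by
  obtain ⟨τ, hτ, hτS⟩ := exists_equiv_extending σ
  suffices G.comap τ = triangleBroom (Fintype.card V) S.card from
    ⟨this ▸ (SimpleGraph.Iso.comap τ G).symm⟩
  refine eq_triangleBroom fun i j hij => ?_
  have hm := h.three_le_card
  have hij' : i.val < j.val := hij
  obtain hj | hj := lt_or_ge j.val S.card
  · have hadj : (triangleBroom S.card S.card).Adj ⟨i, hij'.trans hj⟩ ⟨j, hj⟩ ↔
        G.Adj (τ i) (τ j) := by
      rw [← hcore, hτ i (hij'.trans hj), hτ j hj]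
      rfl
    exact hadj.symm.trans (triangleBroom_adj_of_lt S.card hij)
  · have hpar (k : Fin (Fintype.card V)) (hk : τ k ∉ S) (i : Fin (Fintype.card V)) :
        τ i = parent (τ k) ↔ i.val = S.card - 1 := by
      obtain ⟨last, hlast, hparent_eq⟩ := hparent _ hk
      rw [hparent_eq, ← hτ ⟨last, last.2.trans_le S.card_le_univ⟩ last.2, τ.apply_eq_iff_eq,
        Fin.ext_iff, ← hlast]
    have hjS : τ j ∉ S := fun hmem => hj.not_gt ((hτS j).mp hmem)
    have hji : ¬ (τ i ∉ S ∧ τ j = parent (τ i)) := fun ⟨hiS, hj'⟩ => by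
      have := (hpar i hiS j).mp hj'
      omega
    rw [SimpleGraph.comap_adj, SimpleGraph.adj_comm, h.adj_iff_of_notMem h.ncard_edgeSet hjS,
      or_iff_left hji, hpar j hjS]
    omega

lemma nonempty_iso_of_energy_le (h : SortedCore G x p S parent σ y) (hx : x ≠ 0) {K : ℕ}
    (hK : S.card ≤ K) (hn : K + 2 ≤ Fintype.card V)
    (hle : energy G x ≤ qmin (triangleBroom (Fintype.card V) K) * ∑ v, x v ^ 2) :
    Nonempty (G ≃g triangleBroom (Fintype.card V) K) := by
  have hm := h.three_le_card
  obtain ⟨hcore, hbroom, hout⟩ := h.tight_of_energy_le hK (by omega) rfl hle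
  have hlast := h.last_pos hx fun u hu => (hout u hu).2
  obtain ⟨rfl, hpos, hstrict⟩ :=
    tight_of_broomEnergy_le_pendant hm hK hn h.monotone h.nonneg_zero hlast hbroom
  have hl0 := qmin_triangleBroom_pos (n := Fintype.card V) (K := S.card) (by omega) (by omega)
  have hl1 := qmin_triangleBroom_lt_one (n := Fintype.card V) (by omega) hm
  refine h.nonempty_iso_triangleBroom ?_ fun u => h.parent_eq_last hstrict hl0 hl1 hlast hout
  exact eq_triangleBroom_of_energy_le hm h.connected_comap h.not_colorable_comap h.monotone
    h.abs_eq hpos hstrict ((energy_comap_equiv σ _ (x ∘ Subtype.val)).trans_le hcore)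

end SortedCore

end SortedCore

lemma exists_isDominatingSet_card_eq {V : Type*} [Fintype V] (G : SimpleGraph V) :
    ∃ D, IsDominatingSet G D ∧ D.card = dominationNumber G :=
  Nat.sInf_mem (s := {k | ∃ D, IsDominatingSet G D ∧ D.card = k})
    ⟨_, Finset.univ, fun v hv => absurd (Finset.mem_univ v) hv, rfl⟩

theorem qmin_Cstar_min_unicyclic_large_general
    {V : Type*} [Fintype V] (γ n : ℕ) (hn : 3 * γ + 2 ≤ n)
    (G : SimpleGraph V) (hcard : Fintype.card V = n)
    (hconn : G.Connected) (hnonbip : ¬ G.Colorable 2)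
    (huni : G.edgeSet.ncard = n)
    (hdom : dominationNumber G ≤ γ) :
    qmin (Cstar n 3 (3 * γ - 3)) ≤ qmin G ∧
      (qmin (Cstar n 3 (3 * γ - 3)) = qmin G ↔ Nonempty (G ≃g Cstar n 3 (3 * γ - 3))) := by
  subst hcard
  have := hconn.nonempty
  obtain ⟨x, hx, hxq⟩ := exists_energy_eq_qmin G
  obtain ⟨p, S, parent, σ, y, h⟩ := exists_sortedCore hconn hnonbip huni x
  obtain ⟨D, hD, hDcard⟩ := exists_isDominatingSet_card_eq G
  have hm := h.three_le_card
  have hS : S.card ≤ 3 * γ := (h.card_le_three_mul huni h.two_le_degree hD).trans (by omega)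
  obtain ⟨f⟩ := nonempty_triangleBroom_iso_Cstar (n := Fintype.card V) (by omega) (hm.trans hS)
  have : Nonempty (Fin (Fintype.card V)) := ⟨0, by omega⟩
  rw [← qmin_eq_of_iso f]
  refine ⟨?_, fun heq => ?_, fun ⟨g⟩ => (qmin_eq_of_iso (g.trans f.symm)).symm⟩
  · exact le_of_mul_le_mul_right
      ((h.qmin_triangleBroom_mul_le_energy hS (by omega)).trans_eq hxq) (sum_sq_pos hx)
  · obtain ⟨g⟩ := h.nonempty_iso_of_energy_le hx hS hn (hxq.trans_le (by rw [heq]))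
    exact ⟨g.trans f⟩

/-- For `n ≥ 3γ + 2` (`γ ≥ 1`), among all connected nonbipartite unicyclic graphs of
order `n` with domination number `γ`, the least `Q`-eigenvalue is minimized uniquely
by `C*_{3,3γ-3}`. -/
theorem qmin_Cstar_min_unicyclic_large
    {V : Type*} [Fintype V] (γ n : ℕ) (hγ : 1 ≤ γ) (hn : 3 * γ + 2 ≤ n)
    (G : SimpleGraph V) (hcard : Fintype.card V = n)
    (hconn : G.Connected) (hnonbip : ¬ G.Colorable 2)
    (huni : G.edgeSet.ncard = n)
    (hdom : dominationNumber G = γ) :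
    qmin (Cstar n 3 (3 * γ - 3)) ≤ qmin G ∧
      (qmin (Cstar n 3 (3 * γ - 3)) = qmin G ↔ Nonempty (G ≃g Cstar n 3 (3 * γ - 3))) :=
  qmin_Cstar_min_unicyclic_large_general γ n hn G hcard hconn hnonbip huni hdom.le
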